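/- arXiv:2402.06765 — 2 statements merged into one kernel-verified Lean document; each statement's English description precedes it below -/
import Mathlib

section
/- Suppose D ⊆ ΔΘ is a Borel set, p ∈ I(μ0) has p(D) = 1, and f : ΔΘ → ℝ is bounded and measurable. Suppose every μ̄ ∈ D admits some μ ∈ ΔΘ and γ ∈ (0,1) with γμ ≤ μ0 such that ŵ(λμ + (1−λ)μ̄) > f(μ̄) for all sufficiently small λ ∈ (0,1]. Then ŵ(μ0) ≥ ∫ f dp. -/
open MeasureTheory


/-- The Borel σ-algebra on the space of probability measures (the σ-algebra generated by
evaluation maps, i.e. the subspace σ-algebra of the Giry σ-algebra; for metrizable spaces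
this is the Borel σ-algebra of the weak* topology). -/
instance probMeasurableSpace {Ω : Type*} [MeasurableSpace Ω] :
    MeasurableSpace (ProbabilityMeasure Ω) :=
  MeasurableSpace.comap (fun μ => (μ : Measure Ω)) inferInstance

/-- Sender's expected utility from action `a` at belief `μ`. -/
noncomputable def senderEU {A Θ : Type*} [MeasurableSpace Θ]
    (uS : A → Θ → ℝ) (μ : ProbabilityMeasure Θ) (a : A) : ℝ :=
  ∫ θ, uS a θ ∂(μ : Measure Θ)

/-- The receiver's best responses `A*_R(μ)` at belief `μ`. -/
def bestResponses {A Θ : Type*} [MeasurableSpace Θ]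
    (uR : A → Θ → ℝ) (μ : ProbabilityMeasure Θ) : Set A :=
  {a | ∀ a' : A, ∫ θ, uR a' θ ∂(μ : Measure Θ) ≤ ∫ θ, uR a θ ∂(μ : Measure Θ)}

/-- The sender's upper value function `v`. -/
noncomputable def vFun {A Θ : Type*} [MeasurableSpace Θ]
    (uS uR : A → Θ → ℝ) (μ : ProbabilityMeasure Θ) : ℝ :=
  sSup (senderEU uS μ '' bestResponses uR μ)

/-- The sender's lower value function `w`. -/
noncomputable def wFun {A Θ : Type*} [MeasurableSpace Θ]
    (uS uR : A → Θ → ℝ) (μ : ProbabilityMeasure Θ) : ℝ :=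
  sInf (senderEU uS μ '' bestResponses uR μ)

/-- The set `I(μ0)` of information policies: distributions over posteriors with
barycenter equal to the prior `μ0`. -/
def infoPolicies {Θ : Type*} [MeasurableSpace Θ] (μ0 : ProbabilityMeasure Θ) :
    Set (ProbabilityMeasure (ProbabilityMeasure Θ)) :=
  {p | ∀ B : Set Θ, MeasurableSet B →
    ∫ ν, ((ν : Measure Θ) B).toReal ∂(p : Measure (ProbabilityMeasure Θ))
      = ((μ0 : Measure Θ) B).toReal}

/-- `v̂(μ0)`: the sender's best equilibrium (Bayesian persuasion) value. -/
noncomputable def vHat {A Θ : Type*} [MeasurableSpace Θ]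
    (uS uR : A → Θ → ℝ) (μ0 : ProbabilityMeasure Θ) : ℝ :=
  sSup ((fun p : ProbabilityMeasure (ProbabilityMeasure Θ) =>
    ∫ ν, vFun uS uR ν ∂(p : Measure (ProbabilityMeasure Θ))) '' infoPolicies μ0)

/-- `ŵ(μ0)`: the sender's worst equilibrium value. -/
noncomputable def wHat {A Θ : Type*} [MeasurableSpace Θ]
    (uS uR : A → Θ → ℝ) (μ0 : ProbabilityMeasure Θ) : ℝ :=
  sSup ((fun p : ProbabilityMeasure (ProbabilityMeasure Θ) =>
    ∫ ν, wFun uS uR ν ∂(p : Measure (ProbabilityMeasure Θ))) '' infoPolicies μ0)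

/-- `γμ ≤ mubar`: the measure `μ` scaled by `γ` is setwise below `mubar`. -/
def scaledLE {Θ : Type*} [MeasurableSpace Θ]
    (γ : ℝ) (μ mubar : ProbabilityMeasure Θ) : Prop :=
  ∀ E : Set Θ, MeasurableSet E →
    ENNReal.ofReal γ * (μ : Measure Θ) E ≤ (mubar : Measure Θ) E



namespace Persuade

open Filter Topology
open scoped NNReal ENNReal

section topo
variable {Θ : Type*} [TopologicalSpace Θ] [CompactSpace Θ] [TopologicalSpace.MetrizableSpace Θ]
  [MeasurableSpace Θ] [BorelSpace Θ]

lemma cont_integrable (m : Measure Θ) [IsFiniteMeasure m] (φ : C(Θ, ℝ)) :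
    Integrable (fun θ => φ θ) m :=
  φ.continuous.integrable_of_hasCompactSupport (HasCompactSupport.of_compactSpace _)

lemma integral_sub_le (m : FiniteMeasure Θ) (φ ψ : C(Θ, ℝ)) :
    |∫ θ, φ θ ∂(m : Measure Θ) - ∫ θ, ψ θ ∂(m : Measure Θ)| ≤ ‖φ - ψ‖ * m.mass := by
  rw [← integral_sub (cont_integrable _ φ) (cont_integrable _ ψ)]
  have := norm_integral_le_of_norm_le_const (μ := (m : Measure Θ)) (f := fun θ => φ θ - ψ θ)
    (C := ‖φ - ψ‖) (Eventually.of_forall fun θ => (φ - ψ).norm_coe_le_norm θ)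
  exact this

lemma tendsto_of_cont {γ : Type*} {F : Filter γ} (y : γ → FiniteMeasure Θ) (x : FiniteMeasure Θ)
    (h : ∀ φ : C(Θ, ℝ), Tendsto (fun i => ∫ θ, φ θ ∂(y i : Measure Θ)) F
      (𝓝 (∫ θ, φ θ ∂(x : Measure Θ)))) : Tendsto y F (𝓝 x) := by
  rw [FiniteMeasure.tendsto_iff_forall_integral_tendsto]
  intro f
  exact h f.toContinuousMap

/-- dense sequence of test functions -/
noncomputable def g (Θ : Type*) [TopologicalSpace Θ] [CompactSpace Θ]
    [TopologicalSpace.MetrizableSpace Θ] : ℕ → C(Θ, ℝ) := TopologicalSpace.denseSeq C(Θ, ℝ)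

lemma exists_g (φ : C(Θ, ℝ)) {ε : ℝ} (hε : 0 < ε) : ∃ k, ‖φ - g Θ k‖ < ε := by
  obtain ⟨_, h1, ⟨k, rfl⟩⟩ := (Metric.dense_iff.1
    (TopologicalSpace.denseRange_denseSeq C(Θ, ℝ))) φ ε hε
  refine ⟨k, ?_⟩
  rw [Metric.mem_ball, dist_comm, dist_eq_norm] at h1
  exact h1

lemma tendsto_of_dense {γ : Type*} {F : Filter γ} (y : γ → FiniteMeasure Θ) (x : FiniteMeasure Θ)
    (hy : ∀ᶠ i in F, (y i).mass ≤ 1) (hx : x.mass ≤ 1)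
    (h : ∀ k, Tendsto (fun i => ∫ θ, g Θ k θ ∂(y i : Measure Θ)) F
      (𝓝 (∫ θ, g Θ k θ ∂(x : Measure Θ)))) : Tendsto y F (𝓝 x) := by
  apply tendsto_of_cont
  intro φ
  rw [Metric.tendsto_nhds]
  intro ε hε
  obtain ⟨k, hk⟩ := exists_g φ (show 0 < ε / 3 by positivity)
  filter_upwards [hy, (Metric.tendsto_nhds.1 (h k)) (ε / 3) (by positivity)] with i hi hi2
  have h1 := integral_sub_le (y i) φ (g Θ k)
  have h2 := integral_sub_le x φ (g Θ k)
  have hi' : ((y i).mass : ℝ) ≤ 1 := by exact_mod_cast hi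
  have hx' : (x.mass : ℝ) ≤ 1 := by exact_mod_cast hx
  have h3 : ‖φ - g Θ k‖ * (y i).mass ≤ ‖φ - g Θ k‖ := mul_le_of_le_one_right (norm_nonneg _) hi'
  have h4 : ‖φ - g Θ k‖ * x.mass ≤ ‖φ - g Θ k‖ := mul_le_of_le_one_right (norm_nonneg _) hx'
  rw [Real.dist_eq] at hi2 ⊢
  rw [abs_le] at h1 h2
  rw [abs_lt] at hi2 ⊢
  constructor <;> linarith [h1.1, h1.2, h2.1, h2.2, hi2.1, hi2.2]

lemma measurable_coe' : Measurable (fun x : ProbabilityMeasure Θ => (x : Measure Θ)) :=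
  comap_measurable _

/-- The coercion as a kernel. -/
noncomputable def ker (Θ : Type*) [MeasurableSpace Θ] :
    ProbabilityTheory.Kernel (ProbabilityMeasure Θ) Θ :=
  ⟨fun x => (x : Measure Θ), comap_measurable _⟩

lemma ker_apply (x : ProbabilityMeasure Θ) : ker Θ x = (x : Measure Θ) := rfl

instance : ProbabilityTheory.IsMarkovKernel (ker Θ) := ⟨fun x => by rw [ker_apply]; infer_instance⟩

lemma measurable_int (φ : C(Θ, ℝ)) :
    Measurable (fun x : ProbabilityMeasure Θ => ∫ θ, φ θ ∂(x : Measure Θ)) := by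
  have := (φ.continuous.stronglyMeasurable).integral_kernel (κ := ker Θ)
  exact this.measurable

instance opensMeas : OpensMeasurableSpace (ProbabilityMeasure Θ) := by
  constructor
  apply MeasurableSpace.generateFrom_le
  intro O hO
  let Φ : ProbabilityMeasure Θ → ℕ → ℝ := fun x k => ∫ θ, g Θ k θ ∂(x : Measure Θ)
  have hΦ : Measurable Φ := measurable_pi_lambda _ fun k => measurable_int _
  have hind : IsInducing Φ := by
    rw [isInducing_iff_nhds]
    intro x
    apply le_antisymm
    · rw [← tendsto_iff_comap]
      rw [tendsto_pi_nhds]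
      intro k
      exact (ProbabilityMeasure.continuous_integral_continuousMap (g Θ k)).tendsto x
    · have : Tendsto (fun y : ProbabilityMeasure Θ => y) (comap Φ (𝓝 (Φ x))) (𝓝 x) := by
        rw [ProbabilityMeasure.tendsto_nhds_iff_toFiniteMeasure_tendsto_nhds]
        apply tendsto_of_dense
        · exact Eventually.of_forall fun y => by simp
        · simp
        · intro k
          have h1 : Tendsto Φ (comap Φ (𝓝 (Φ x))) (𝓝 (Φ x)) := tendsto_comap
          exact (tendsto_pi_nhds.1 h1) k
      exact this
  obtain ⟨O', hO', rfl⟩ := hind.isOpen_iff.1 hO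
  exact hΦ hO'.measurableSet

/-- multiply a finite measure by a nonnegative continuous density -/
noncomputable def dens (h : C(Θ, ℝ≥0)) (m : FiniteMeasure Θ) : FiniteMeasure Θ :=
  ⟨(m : Measure Θ).withDensity (fun θ => (h θ : ℝ≥0∞)), by
    obtain ⟨C, hC⟩ := (isCompact_range h.continuous).bddAbove
    refine isFiniteMeasure_withDensity ?_
    refine ((lintegral_mono (g := fun _ => (C : ℝ≥0∞)) fun θ => ?_).trans_lt ?_).ne
    · exact ENNReal.coe_le_coe.2 (hC ⟨θ, rfl⟩)
    · simpa using ENNReal.mul_lt_top (by simp) (measure_lt_top _ _)⟩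

lemma dens_int (h : C(Θ, ℝ≥0)) (m : FiniteMeasure Θ) (φ : Θ → ℝ) :
    ∫ θ, φ θ ∂(dens h m : Measure Θ) = ∫ θ, (h θ : ℝ) * φ θ ∂(m : Measure Θ) := by
  have := integral_withDensity_eq_integral_smul (μ := (m : Measure Θ)) h.continuous.measurable φ
  simpa [dens, NNReal.smul_def] using this

lemma dens_cont (h : C(Θ, ℝ≥0)) : Continuous (dens h : FiniteMeasure Θ → _) := by
  rw [FiniteMeasure.continuous_iff_forall_continuousMap_continuous_integral]
  intro φ
  simp_rw [dens_int]
  let ψ : C(Θ, ℝ) := ⟨fun θ => (h θ : ℝ) * φ θ, by fun_prop⟩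
  exact FiniteMeasure.continuous_integral_continuousMap ψ

lemma add_open (a b : FiniteMeasure Θ) {U V : Set (FiniteMeasure Θ)} (hU : IsOpen U)
    (hV : IsOpen V) (ha : a ∈ U) (hb : b ∈ V) :
    ∀ᶠ m in 𝓝 (a + b), ∃ a' ∈ U, ∃ b' ∈ V, a' + b' = m := by
  set m := a + b with hm
  have hle : (a : Measure Θ) ≤ (m : Measure Θ) := by
    rw [hm, FiniteMeasure.toMeasure_add]; exact Measure.le_add_right le_rfl
  have hac := Measure.absolutelyContinuous_of_le hle
  set h : Θ → ℝ := fun θ => ((a : Measure Θ).rnDeriv m θ).toReal with hh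
  have h01 : ∀ᵐ θ ∂(m : Measure Θ), h θ ≤ 1 := by
    filter_upwards [Measure.rnDeriv_le_one_of_le hle] with θ hθ
    exact ENNReal.toReal_le_of_le_ofReal zero_le_one (by simpa using hθ)
  have hint : Integrable h m := Measure.integrable_toReal_rnDeriv
  -- approximations
  have happ : ∀ n : ℕ, ∃ k : C(Θ, ℝ≥0), (∀ θ, k θ ≤ 1) ∧
      ∫ θ, ‖h θ - k θ‖ ∂(m : Measure Θ) ≤ 1 / ((n : ℝ) + 1) := by
    intro n
    obtain ⟨k, hk, hki⟩ := hint.exists_boundedContinuous_integral_sub_le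
      (ε := 1 / ((n : ℝ) + 1)) (by positivity)
    let k' : C(Θ, ℝ≥0) := ⟨fun θ => min 1 (k θ).toNNReal, by fun_prop⟩
    refine ⟨k', fun θ => min_le_left _ _, le_trans ?_ hk⟩
    apply integral_mono_of_nonneg (Eventually.of_forall fun _ => norm_nonneg _) (hint.sub hki).norm
    filter_upwards [h01] with θ hθ
    have h0 : 0 ≤ h θ := ENNReal.toReal_nonneg
    show |h θ - ((min 1 (k θ).toNNReal : ℝ≥0) : ℝ)| ≤ |h θ - k θ|
    rw [NNReal.coe_min, Real.coe_toNNReal', NNReal.coe_one]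
    rcases le_total (k θ) 0 with h2 | h2
    · rw [max_eq_right h2, min_eq_right zero_le_one, sub_zero, abs_of_nonneg h0,
        abs_of_nonneg (by linarith)]; linarith
    · rw [max_eq_left h2]
      rcases le_total (k θ) 1 with h3 | h3
      · rw [min_eq_right h3]
      · rw [min_eq_left h3, abs_of_nonpos (by linarith), abs_of_nonpos (by linarith)]; linarith
  choose k hk1 hk2 using happ
  have hk2' : Tendsto (fun n => ∫ θ, ‖h θ - k n θ‖ ∂(m : Measure Θ)) atTop (𝓝 0) :=
    squeeze_zero (fun n => integral_nonneg fun _ => norm_nonneg _) hk2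
      tendsto_one_div_add_atTop_nhds_zero_nat
  have kint : ∀ (n : ℕ) (φ : C(Θ, ℝ)), Integrable (fun θ => (k n θ : ℝ) * φ θ) m := by
    intro n φ
    exact cont_integrable _ (⟨fun θ => (k n θ : ℝ) * φ θ, by fun_prop⟩ : C(Θ, ℝ))
  have hinta : ∀ φ : C(Θ, ℝ), Integrable (fun θ => h θ * φ θ) m := by
    intro φ
    exact hint.mul_bdd (c := ‖φ‖) φ.continuous.aestronglyMeasurable
      (Eventually.of_forall fun θ => φ.norm_coe_le_norm θ)
  have inta : ∀ φ : C(Θ, ℝ), ∫ θ, φ θ ∂(a : Measure Θ) = ∫ θ, h θ * φ θ ∂(m : Measure Θ) := by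
    intro φ
    rw [← integral_rnDeriv_smul hac]; rfl
  have conva : ∀ φ : C(Θ, ℝ), Tendsto (fun n => ∫ θ, (k n θ : ℝ) * φ θ ∂(m : Measure Θ)) atTop
      (𝓝 (∫ θ, φ θ ∂(a : Measure Θ))) := by
    intro φ
    rw [inta, tendsto_iff_norm_sub_tendsto_zero]
    refine squeeze_zero (fun n => norm_nonneg _) (fun n => ?_) (by simpa using hk2'.mul_const ‖φ‖)
    rw [← integral_sub (kint n φ) (hinta φ), ← integral_mul_const]
    apply norm_integral_le_of_norm_le
    · refine Integrable.mul_const (Integrable.norm (hint.sub ?_)) _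
      simpa using kint n 1
    · refine Eventually.of_forall fun θ => ?_
      rw [← sub_mul, norm_mul, norm_sub_rev]
      exact mul_le_mul_of_nonneg_left (φ.norm_coe_le_norm θ) (norm_nonneg _)
  let k' : ℕ → C(Θ, ℝ≥0) := fun n => ⟨fun θ => 1 - k n θ, by fun_prop⟩
  have hk' : ∀ n θ, ((k' n θ : ℝ≥0) : ℝ) = 1 - k n θ := fun n θ => NNReal.coe_sub (hk1 n θ)
  have ta : Tendsto (fun n => dens (k n) m) atTop (𝓝 a) := by
    apply tendsto_of_cont
    intro φ
    simp_rw [dens_int]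
    exact conva φ
  have tb : Tendsto (fun n => dens (k' n) m) atTop (𝓝 b) := by
    apply tendsto_of_cont
    intro φ
    simp_rw [dens_int, hk', sub_mul, one_mul]
    have e1 : ∫ θ, φ θ ∂(b : Measure Θ) =
        ∫ θ, φ θ ∂(m : Measure Θ) - ∫ θ, φ θ ∂(a : Measure Θ) := by
      rw [hm, FiniteMeasure.toMeasure_add, integral_add_measure (cont_integrable _ φ)
        (cont_integrable _ φ)]; ring
    rw [e1]
    have e2 : ∀ n, ∫ θ, (φ θ - (k n θ : ℝ) * φ θ) ∂(m : Measure Θ) =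
        ∫ θ, φ θ ∂(m : Measure Θ) - ∫ θ, (k n θ : ℝ) * φ θ ∂(m : Measure Θ) := fun n =>
      integral_sub (cont_integrable _ φ) (kint n φ)
    simp_rw [e2]
    exact (conva φ).const_sub _
  obtain ⟨n, hna, hnb⟩ := ((ta.eventually (hU.mem_nhds ha)).and
    (tb.eventually (hV.mem_nhds hb))).exists
  filter_upwards [(dens_cont (k n)).continuousAt.eventually (hU.mem_nhds hna),
    (dens_cont (k' n)).continuousAt.eventually (hV.mem_nhds hnb)] with m' h1 h2
  refine ⟨_, h1, _, h2, ?_⟩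
  apply FiniteMeasure.toMeasure_injective
  rw [FiniteMeasure.toMeasure_add]
  show (m' : Measure Θ).withDensity _ + (m' : Measure Θ).withDensity _ = _
  rw [← withDensity_add_left (by fun_prop)]
  convert withDensity_one using 2
  ext θ
  show ((k n θ : ℝ≥0) : ℝ≥0∞) + ((1 - k n θ : ℝ≥0) : ℝ≥0∞) = 1
  rw [← ENNReal.coe_add, add_tsub_cancel_of_le (hk1 n θ)]; rfl

end topo

section jensen
variable {Θ : Type*} [TopologicalSpace Θ] [CompactSpace Θ] [TopologicalSpace.MetrizableSpace Θ]
  [MeasurableSpace Θ] [BorelSpace Θ]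

/-- lower semicontinuous, superadditive, homogeneous, bounded functionals -/
structure Good (M : ℝ) (V : FiniteMeasure Θ → ℝ) : Prop where
  lsc : LowerSemicontinuous V
  add : ∀ m m', V m + V m' ≤ V (m + m')
  smul : ∀ (r : ℝ≥0) m, V (r • m) = r * V m
  bound : ∀ m, |V m| ≤ M * m.mass

lemma Good.zero {M : ℝ} {V : FiniteMeasure Θ → ℝ} (hV : Good M V) : V 0 = 0 := by
  have := hV.smul 0 0
  simpa using this

lemma Good.sum {M : ℝ} {V : FiniteMeasure Θ → ℝ} (hV : Good M V) {ι : Type*} (s : Finset ι)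
    (m : ι → FiniteMeasure Θ) : ∑ i ∈ s, V (m i) ≤ V (∑ i ∈ s, m i) := by
  classical
  induction s using Finset.induction_on with
  | empty => simp [hV.zero]
  | insert i s hi ih =>
    rw [Finset.sum_insert hi, Finset.sum_insert hi]
    exact (add_le_add le_rfl ih).trans (hV.add _ _)

lemma measurable_ev {B : Set Θ} (hB : MeasurableSet B) :
    Measurable (fun x : ProbabilityMeasure Θ => (x : Measure Θ) B) :=
  (Measure.measurable_coe hB).comp measurable_coe'

lemma info_iff (μ0 : ProbabilityMeasure Θ) (p : ProbabilityMeasure (ProbabilityMeasure Θ)) :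
    p ∈ infoPolicies μ0 ↔ ∀ B : Set Θ, MeasurableSet B →
      ∫⁻ x, (x : Measure Θ) B ∂(p : Measure (ProbabilityMeasure Θ)) = (μ0 : Measure Θ) B := by
  refine forall₂_congr fun B hB => ?_
  rw [integral_toReal (measurable_ev hB).aemeasurable
    (Eventually.of_forall fun x => measure_lt_top _ _)]
  refine ENNReal.toReal_eq_toReal_iff' ?_ (measure_ne_top _ _)
  refine ((lintegral_mono (g := fun _ => (1 : ℝ≥0∞)) fun x => prob_le_one).trans_lt ?_).ne
  simp

/-- partial barycenter -/
noncomputable def bary (p : Measure (ProbabilityMeasure Θ)) [IsFiniteMeasure p]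
    (s : Set (ProbabilityMeasure Θ)) : FiniteMeasure Θ :=
  ⟨(p.restrict s).bind (ker Θ), by
    constructor
    rw [Measure.bind_apply MeasurableSet.univ (ker Θ).aemeasurable]
    simp⟩

lemma bary_apply (p : Measure (ProbabilityMeasure Θ)) [IsFiniteMeasure p]
    (s : Set (ProbabilityMeasure Θ)) {B : Set Θ} (hB : MeasurableSet B) :
    (bary p s : Measure Θ) B = ∫⁻ x in s, (x : Measure Θ) B ∂p := by
  show ((p.restrict s).bind (ker Θ)) B = _
  rw [Measure.bind_apply hB (ker Θ).aemeasurable]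
  rfl

lemma bary_mass (p : Measure (ProbabilityMeasure Θ)) [IsFiniteMeasure p]
    (s : Set (ProbabilityMeasure Θ)) : ((bary p s).mass : ℝ≥0∞) = p s := by
  rw [FiniteMeasure.ennreal_mass, bary_apply p s MeasurableSet.univ]
  simp

lemma bary_int (p : Measure (ProbabilityMeasure Θ)) [IsFiniteMeasure p]
    (s : Set (ProbabilityMeasure Θ)) (φ : C(Θ, ℝ)) :
    ∫ θ, φ θ ∂(bary p s : Measure Θ) = ∫ x in s, ∫ θ, φ θ ∂(x : Measure Θ) ∂p := by
  have h0 : ((ker Θ).comp (ProbabilityTheory.Kernel.const Unit (p.restrict s))) () =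
      (bary p s : Measure Θ) := by
    rw [ProbabilityTheory.Kernel.comp_apply]; rfl
  have := ProbabilityTheory.Kernel.integral_comp (a := ()) (η := ker Θ)
    (κ := ProbabilityTheory.Kernel.const Unit (p.restrict s)) (f := fun θ => φ θ)
    (by rw [h0]; exact cont_integrable _ φ)
  rw [h0] at this
  exact this

lemma sum_bary {μ0 : ProbabilityMeasure Θ} {p : ProbabilityMeasure (ProbabilityMeasure Θ)}
    (hp : p ∈ infoPolicies μ0) {ι : Type*} [Fintype ι] [MeasurableSpace ι]
    [MeasurableSingletonClass ι] (Q : ProbabilityMeasure Θ → ι) (hQ : Measurable Q) :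
    ∑ j, bary (p : Measure (ProbabilityMeasure Θ)) (Q ⁻¹' {j}) = μ0.toFiniteMeasure := by
  apply FiniteMeasure.toMeasure_injective
  ext B hB
  rw [FiniteMeasure.toMeasure_sum, Measure.finsetSum_apply]
  simp_rw [bary_apply _ _ hB]
  show _ = (μ0 : Measure Θ) B
  rw [← (info_iff μ0 p).1 hp B hB]
  have h1 : (p : Measure (ProbabilityMeasure Θ)) =
      Measure.sum fun j => (p : Measure (ProbabilityMeasure Θ)).restrict (Q ⁻¹' {j}) := by
    rw [← Measure.restrict_iUnion]
    · have : (⋃ j, Q ⁻¹' {j}) = Set.univ := by ext; simp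
      rw [this, Measure.restrict_univ]
    · intro i j hij
      exact Disjoint.preimage _ (by simpa using hij)
    · intro j
      exact hQ (measurableSet_singleton j)
  conv_rhs => rw [h1]
  rw [lintegral_sum_measure, tsum_fintype]

/-- conditional average on a cell -/
noncomputable def avg (p : Measure (ProbabilityMeasure Θ)) [IsFiniteMeasure p]
    (s : Set (ProbabilityMeasure Θ)) : FiniteMeasure Θ := (bary p s).mass⁻¹ • bary p s

lemma jensen_finite {M : ℝ} {V : FiniteMeasure Θ → ℝ} (hV : Good M V) {μ0 : ProbabilityMeasure Θ}
    {p : ProbabilityMeasure (ProbabilityMeasure Θ)}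
    (hp : p ∈ infoPolicies μ0) {ι : Type*} [Fintype ι] [MeasurableSpace ι]
    [MeasurableSingletonClass ι] (Q : ProbabilityMeasure Θ → ι) (hQ : Measurable Q) :
    ∫ x, V (avg (p : Measure (ProbabilityMeasure Θ)) (Q ⁻¹' {Q x})) ∂(p : Measure _)
      ≤ V μ0.toFiniteMeasure := by
  set P := (p : Measure (ProbabilityMeasure Θ))
  have h1 : ∫ x, V (avg P (Q ⁻¹' {Q x})) ∂P =
      ∫ j, V (avg P (Q ⁻¹' {j})) ∂(P.map Q) := by
    rw [integral_map hQ.aemeasurable]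
    exact (measurable_of_countable _).aestronglyMeasurable
  have : IsFiniteMeasure (P.map Q) := inferInstance
  rw [h1, integral_fintype Integrable.of_finite, ← sum_bary hp Q hQ]
  refine le_trans (le_of_eq ?_) (hV.sum _ _)
  refine Finset.sum_congr rfl fun j _ => ?_
  have h2 : (P.map Q).real {j} = (bary P (Q ⁻¹' {j})).mass := by
    rw [Measure.real, Measure.map_apply hQ (measurableSet_singleton j), ← bary_mass]; rfl
  rw [h2, smul_eq_mul, avg, hV.smul]
  by_cases h0 : (bary P (Q ⁻¹' {j})).mass = 0
  · rw [h0, (FiniteMeasure.mass_zero_iff _).1 h0, hV.zero]; simp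
  · rw [NNReal.coe_inv, mul_inv_cancel_left₀ (by exact_mod_cast h0)]

lemma Good.meas {M : ℝ} {V : FiniteMeasure Θ → ℝ} (hV : Good M V) :
    Measurable (fun x : ProbabilityMeasure Θ => V x.toFiniteMeasure) := by
  have : LowerSemicontinuous (fun x : ProbabilityMeasure Θ => V x.toFiniteMeasure) :=
    fun x y hy => (ProbabilityMeasure.toFiniteMeasure_continuous.tendsto x).eventually
      (hV.lsc x.toFiniteMeasure y hy)
  exact this.measurable

lemma int_g_bound (x : ProbabilityMeasure Θ) (φ : C(Θ, ℝ)) :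
    |∫ θ, φ θ ∂(x : Measure Θ)| ≤ ‖φ‖ := by
  simpa using integral_sub_le x.toFiniteMeasure φ 0

/-- cells: index type -/
abbrev Idx (Θ : Type*) [TopologicalSpace Θ] [CompactSpace Θ] [TopologicalSpace.MetrizableSpace Θ]
    (n : ℕ) : Type :=
  {j : Fin n → ℤ // j ∈ Finset.Icc (fun k : Fin n => ⌊-(((n : ℝ) + 1) * ‖g Θ k‖)⌋)
    (fun k : Fin n => ⌊((n : ℝ) + 1) * ‖g Θ k‖⌋)}

/-- the cell of a belief -/
noncomputable def cell (n : ℕ) (x : ProbabilityMeasure Θ) : Idx Θ n :=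
  ⟨fun k => ⌊((n : ℝ) + 1) * ∫ θ, g Θ k θ ∂(x : Measure Θ)⌋, by
    rw [Finset.mem_Icc]
    have hn : (0 : ℝ) ≤ (n : ℝ) + 1 := by positivity
    constructor
    · intro k
      apply Int.floor_mono
      rw [← mul_neg]
      exact mul_le_mul_of_nonneg_left (abs_le.1 (int_g_bound x (g Θ k))).1 hn
    · intro k
      apply Int.floor_mono
      exact mul_le_mul_of_nonneg_left (abs_le.1 (int_g_bound x (g Θ k))).2 hn⟩

lemma cell_meas (n : ℕ) : Measurable (cell n : ProbabilityMeasure Θ → Idx Θ n) := by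
  apply Measurable.subtype_mk
  refine measurable_pi_lambda _ fun k => ?_
  exact ((measurable_int _).const_mul _).floor

lemma cell_close {n k : ℕ} (hk : k < n) {x y : ProbabilityMeasure Θ} (h : cell n y = cell n x) :
    |∫ θ, g Θ k θ ∂(y : Measure Θ) - ∫ θ, g Θ k θ ∂(x : Measure Θ)| ≤ 1 / ((n : ℝ) + 1) := by
  have h1 := congrFun (congrArg Subtype.val h) ⟨k, hk⟩
  have h2 := Int.abs_sub_lt_one_of_floor_eq_floor h1
  have hn : (0 : ℝ) < (n : ℝ) + 1 := by positivity
  rw [← mul_sub, abs_mul, abs_of_pos hn] at h2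
  rw [le_div_iff₀ hn, mul_comm]
  exact h2.le

lemma avg_tendsto (p : ProbabilityMeasure (ProbabilityMeasure Θ)) (x : ProbabilityMeasure Θ)
    (hx : ∀ n, (p : Measure (ProbabilityMeasure Θ)) (cell n ⁻¹' {cell n x}) ≠ 0) :
    Tendsto (fun n => avg (p : Measure (ProbabilityMeasure Θ)) (cell n ⁻¹' {cell n x})) atTop
      (𝓝 x.toFiniteMeasure) := by
  set P := (p : Measure (ProbabilityMeasure Θ))
  have hm : ∀ n, (bary P (cell n ⁻¹' {cell n x})).mass ≠ 0 := by
    intro n h0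
    apply hx n
    rw [← bary_mass, h0]; rfl
  apply tendsto_of_dense
  · refine Eventually.of_forall fun n => le_of_eq ?_
    rw [avg, FiniteMeasure.mass, FiniteMeasure.smul_apply]
    exact inv_mul_cancel₀ (hm n)
  · simp
  · intro k
    rw [tendsto_iff_norm_sub_tendsto_zero]
    refine squeeze_zero' (Eventually.of_forall fun n => norm_nonneg _) ?_
      tendsto_one_div_add_atTop_nhds_zero_nat
    filter_upwards [eventually_gt_atTop k] with n hn
    set s := (cell n : ProbabilityMeasure Θ → Idx Θ n) ⁻¹' {cell n x} with hs
    have hsm : MeasurableSet s := cell_meas n (measurableSet_singleton _)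
    set a := ∫ θ, g Θ k θ ∂(x : Measure Θ) with ha
    have hM : (P.real s) = (bary P s).mass := by rw [Measure.real, ← bary_mass]; rfl
    have hMpos : 0 < P.real s := by
      rw [hM]; exact_mod_cast pos_iff_ne_zero.2 (hm n)
    have e1 : ∫ θ, g Θ k θ ∂(avg P s : Measure Θ) =
        (P.real s)⁻¹ * ∫ y in s, ∫ θ, g Θ k θ ∂(y : Measure Θ) ∂P := by
      rw [avg, FiniteMeasure.toMeasure_smul, integral_smul_nnreal_measure, bary_int, hM,
        NNReal.smul_def, NNReal.coe_inv, smul_eq_mul]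
    have hint : Integrable (fun y : ProbabilityMeasure Θ => ∫ θ, g Θ k θ ∂(y : Measure Θ))
        (P.restrict s) := by
      refine Integrable.of_bound (measurable_int _).aestronglyMeasurable ‖g Θ k‖ ?_
      exact Eventually.of_forall fun y => int_g_bound y _
    have e2 : (P.real s)⁻¹ * ∫ y in s, ∫ θ, g Θ k θ ∂(y : Measure Θ) ∂P - a =
        (P.real s)⁻¹ * ∫ y in s, (∫ θ, g Θ k θ ∂(y : Measure Θ) - a) ∂P := by
      rw [integral_sub hint (integrable_const _), setIntegral_const, smul_eq_mul]
      field_simp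
    show ‖∫ θ, g Θ k θ ∂(avg P s : Measure Θ) - a‖ ≤ _
    rw [e1, e2, norm_mul, norm_inv, Real.norm_of_nonneg hMpos.le, inv_mul_le_iff₀ hMpos, mul_comm]
    refine norm_setIntegral_le_of_norm_le_const (measure_lt_top _ _) fun y hy => ?_
    exact cell_close hn hy

lemma jensen {M : ℝ} {V : FiniteMeasure Θ → ℝ} (hV : Good M V) {μ0 : ProbabilityMeasure Θ}
    {p : ProbabilityMeasure (ProbabilityMeasure Θ)} (hp : p ∈ infoPolicies μ0) :
    ∫ x, V x.toFiniteMeasure ∂(p : Measure (ProbabilityMeasure Θ)) ≤ V μ0.toFiniteMeasure := by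
  set P := (p : Measure (ProbabilityMeasure Θ)) with hP
  let W : ℕ → ProbabilityMeasure Θ → ℝ := fun n x => V (avg P (cell n ⁻¹' {cell n x}))
  have hWm : ∀ n, Measurable (W n) := fun n =>
    (measurable_of_countable (fun j : Idx Θ n => V (avg P (cell n ⁻¹' {j})))).comp (cell_meas n)
  have hM : 0 ≤ M := by
    have := (abs_nonneg _).trans (hV.bound μ0.toFiniteMeasure)
    simpa using this
  have havg : ∀ s, |V (avg P s)| ≤ M := by
    intro s
    refine (hV.bound _).trans (mul_le_of_le_one_right hM ?_)
    have : (avg P s).mass ≤ 1 := by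
      rw [avg, FiniteMeasure.mass, FiniteMeasure.smul_apply]
      exact inv_mul_le_one
    exact_mod_cast this
  have hVb : ∀ x : ProbabilityMeasure Θ, |V x.toFiniteMeasure| ≤ M := by
    intro x; simpa using hV.bound x.toFiniteMeasure
  have hWi : ∀ n, Integrable (W n) P := fun n =>
    Integrable.of_bound (hWm n).aestronglyMeasurable M (Eventually.of_forall fun x => havg _)
  have hae : ∀ᵐ x ∂P, ∀ n, P (cell n ⁻¹' {cell n x}) ≠ 0 := by
    rw [ae_all_iff]
    intro n
    have : ∀ᵐ x ∂P, ∀ j : Idx Θ n, cell n x = j → P (cell n ⁻¹' {j}) ≠ 0 := by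
      rw [ae_all_iff]
      intro j
      by_cases h0 : P (cell n ⁻¹' {j}) = 0
      · have : ∀ᵐ x ∂P, x ∉ (cell n : ProbabilityMeasure Θ → Idx Θ n) ⁻¹' {j} :=
          measure_eq_zero_iff_ae_notMem.1 h0
        filter_upwards [this] with x hx hxj
        exact absurd hxj hx
      · exact Eventually.of_forall fun x _ => h0
    filter_upwards [this] with x hx using hx _ rfl
  have hlim : Tendsto (fun n => ∫ x, min (V x.toFiniteMeasure) (W n x) ∂P) atTop
      (𝓝 (∫ x, V x.toFiniteMeasure ∂P)) := by
    refine tendsto_integral_of_dominated_convergence (fun _ => M)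
      (fun n => (hV.meas.min (hWm n)).aestronglyMeasurable) (integrable_const _) ?_ ?_
    · intro n
      refine Eventually.of_forall fun x => ?_
      exact abs_le.2 ⟨le_min (abs_le.1 (hVb x)).1 (abs_le.1 (havg _)).1,
        (min_le_left _ _).trans (abs_le.1 (hVb x)).2⟩
    · filter_upwards [hae] with x hx
      have ht := avg_tendsto p x hx
      rw [tendsto_order]
      constructor
      · intro c hc
        filter_upwards [ht.eventually (hV.lsc _ c hc)] with n hn
        exact lt_min hc hn
      · intro c hc
        exact Eventually.of_forall fun n => (min_le_left _ _).trans_lt hc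
  refine le_of_tendsto hlim (Eventually.of_forall fun n => ?_)
  refine le_trans ?_ (jensen_finite hV hp (cell n) (cell_meas n))
  refine integral_mono (Integrable.of_bound (hV.meas.min (hWm n)).aestronglyMeasurable M
    (Eventually.of_forall fun x => ?_)) (hWi n) fun x => min_le_right _ _
  exact abs_le.2 ⟨le_min (abs_le.1 (hVb x)).1 (abs_le.1 (havg _)).1,
    (min_le_left _ _).trans (abs_le.1 (hVb x)).2⟩

end jensen

section value
variable {A Θ : Type*}
  [TopologicalSpace A] [CompactSpace A] [Nonempty A]
  [TopologicalSpace Θ] [CompactSpace Θ] [TopologicalSpace.MetrizableSpace Θ]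
  [MeasurableSpace Θ] [BorelSpace Θ]

lemma int_cont {u : A → Θ → ℝ} (hu : Continuous fun p : A × Θ => u p.1 p.2) :
    Continuous fun q : FiniteMeasure Θ × A => ∫ θ, u q.2 θ ∂(q.1 : Measure Θ) := by
  let U : C(A, C(Θ, ℝ)) := ContinuousMap.curry ⟨fun p : A × Θ => u p.1 p.2, hu⟩
  rw [continuous_iff_continuousAt]
  rintro ⟨m0, a0⟩
  have h1 : Tendsto (fun q : FiniteMeasure Θ × A => ∫ θ, U a0 θ ∂(q.1 : Measure Θ))
      (𝓝 (m0, a0)) (𝓝 (∫ θ, U a0 θ ∂(m0 : Measure Θ))) :=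
    ((FiniteMeasure.continuous_integral_continuousMap (U a0)).comp continuous_fst).tendsto (m0, a0)
  have h2 : Tendsto (fun q : FiniteMeasure Θ × A => ∫ θ, U q.2 θ ∂(q.1 : Measure Θ) -
      ∫ θ, U a0 θ ∂(q.1 : Measure Θ)) (𝓝 (m0, a0)) (𝓝 0) := by
    refine squeeze_zero_norm (a := fun q : FiniteMeasure Θ × A => ‖U q.2 - U a0‖ * q.1.mass)
      (fun q => integral_sub_le q.1 (U q.2) (U a0)) ?_
    have hc : Continuous (fun q : FiniteMeasure Θ × A => ‖U q.2 - U a0‖ * (q.1.mass : ℝ)) := by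
      have := U.continuous
      fun_prop
    have := hc.tendsto (m0, a0)
    simpa using this
  have := h2.add h1
  simpa [ContinuousAt, U] using this

/-- receiver best responses at a finite measure -/
def BR (uR : A → Θ → ℝ) (m : FiniteMeasure Θ) : Set A :=
  {a | ∀ a' : A, ∫ θ, uR a' θ ∂(m : Measure Θ) ≤ ∫ θ, uR a θ ∂(m : Measure Θ)}

/-- homogeneous extension of `wFun` -/
noncomputable def wT (uS uR : A → Θ → ℝ) (m : FiniteMeasure Θ) : ℝ :=
  sInf ((fun a => ∫ θ, uS a θ ∂(m : Measure Θ)) '' BR uR m)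

lemma wFun_eq (uS uR : A → Θ → ℝ) (x : ProbabilityMeasure Θ) :
    wFun uS uR x = wT uS uR x.toFiniteMeasure := rfl

variable {uS uR : A → Θ → ℝ}

lemma br_compact (hR : Continuous fun p : A × Θ => uR p.1 p.2) (m : FiniteMeasure Θ) :
    IsCompact (BR uR m) := by
  apply IsClosed.isCompact
  have hc : Continuous fun a => ∫ θ, uR a θ ∂(m : Measure Θ) :=
    (int_cont hR).comp (continuous_const.prodMk continuous_id)
  have : BR uR m = ⋂ a', {a | ∫ θ, uR a' θ ∂(m : Measure Θ) ≤ ∫ θ, uR a θ ∂(m : Measure Θ)} := by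
    ext; simp [BR]
  rw [this]
  exact isClosed_iInter fun a' => isClosed_le continuous_const hc

lemma br_nonempty (hR : Continuous fun p : A × Θ => uR p.1 p.2) (m : FiniteMeasure Θ) :
    (BR uR m).Nonempty := by
  have hc : Continuous fun a => ∫ θ, uR a θ ∂(m : Measure Θ) :=
    (int_cont hR).comp (continuous_const.prodMk continuous_id)
  obtain ⟨a, -, ha⟩ := isCompact_univ.exists_isMaxOn Set.univ_nonempty hc.continuousOn
  exact ⟨a, fun a' => ha (Set.mem_univ a')⟩


lemma img_compact (hS : Continuous fun p : A × Θ => uS p.1 p.2)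
    (hR : Continuous fun p : A × Θ => uR p.1 p.2) (m : FiniteMeasure Θ) :
    IsCompact ((fun a => ∫ θ, uS a θ ∂(m : Measure Θ)) '' BR uR m) :=
  (br_compact hR m).image ((int_cont hS).comp (continuous_const.prodMk continuous_id))

lemma wT_attained (hS : Continuous fun p : A × Θ => uS p.1 p.2)
    (hR : Continuous fun p : A × Θ => uR p.1 p.2) (m : FiniteMeasure Θ) :
    ∃ a ∈ BR uR m, ∫ θ, uS a θ ∂(m : Measure Θ) = wT uS uR m :=
  (img_compact hS hR m).sInf_mem ((br_nonempty hR m).image _)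

lemma wT_le (hS : Continuous fun p : A × Θ => uS p.1 p.2)
    (hR : Continuous fun p : A × Θ => uR p.1 p.2) {m : FiniteMeasure Θ} {a : A} (ha : a ∈ BR uR m) :
    wT uS uR m ≤ ∫ θ, uS a θ ∂(m : Measure Θ) :=
  csInf_le (img_compact hS hR m).bddBelow ⟨a, ha, rfl⟩

lemma wT_lsc (hS : Continuous fun p : A × Θ => uS p.1 p.2)
    (hR : Continuous fun p : A × Θ => uR p.1 p.2) : LowerSemicontinuous (wT uS uR : FiniteMeasure Θ → ℝ) := by
  rw [lowerSemicontinuous_iff_isClosed_preimage]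
  intro c
  have hcl : IsClosed {q : FiniteMeasure Θ × A | q.2 ∈ BR uR q.1 ∧
      ∫ θ, uS q.2 θ ∂(q.1 : Measure Θ) ≤ c} := by
    have : {q : FiniteMeasure Θ × A | q.2 ∈ BR uR q.1 ∧
      ∫ θ, uS q.2 θ ∂(q.1 : Measure Θ) ≤ c} =
      (⋂ a', {q : FiniteMeasure Θ × A | ∫ θ, uR a' θ ∂(q.1 : Measure Θ) ≤
        ∫ θ, uR q.2 θ ∂(q.1 : Measure Θ)}) ∩
      {q : FiniteMeasure Θ × A | ∫ θ, uS q.2 θ ∂(q.1 : Measure Θ) ≤ c} := by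
      ext; simp [BR]
    rw [this]
    refine IsClosed.inter (isClosed_iInter fun a' => isClosed_le ?_ (int_cont hR))
      (isClosed_le (int_cont hS) continuous_const)
    exact (int_cont hR).comp (continuous_fst.prodMk (continuous_const (y := a')))
  have := isClosedMap_fst_of_compactSpace _ hcl
  convert this using 1
  ext m
  constructor
  · intro hm
    obtain ⟨a, ha, h⟩ := wT_attained hS hR m
    exact ⟨(m, a), ⟨ha, h.trans_le hm⟩, rfl⟩
  · rintro ⟨⟨m', a⟩, ⟨h1, h2⟩, rfl⟩
    exact (wT_le hS hR h1).trans h2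

lemma wT_bound (hS : Continuous fun p : A × Θ => uS p.1 p.2)
    (hR : Continuous fun p : A × Θ => uR p.1 p.2) {M : ℝ} (hM : ∀ a θ, |uS a θ| ≤ M) (m : FiniteMeasure Θ) :
    |wT uS uR m| ≤ M * m.mass := by
  obtain ⟨a, -, h⟩ := wT_attained hS hR m
  rw [← h]
  exact norm_integral_le_of_norm_le_const (μ := (m : Measure Θ)) (f := fun θ => uS a θ) (C := M)
    (Eventually.of_forall fun θ => hM a θ)

lemma wT_smul_le (hS : Continuous fun p : A × Θ => uS p.1 p.2)
    (hR : Continuous fun p : A × Θ => uR p.1 p.2) {r : ℝ≥0} (hr : 0 < r) (m : FiniteMeasure Θ) :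
    wT uS uR (r • m) ≤ r * wT uS uR m := by
  obtain ⟨a, ha, h⟩ := wT_attained hS hR m
  have e : ∀ φ : Θ → ℝ, ∫ θ, φ θ ∂((r • m : FiniteMeasure Θ) : Measure Θ) =
      r * ∫ θ, φ θ ∂(m : Measure Θ) := by
    intro φ
    rw [FiniteMeasure.toMeasure_smul, integral_smul_nnreal_measure, NNReal.smul_def, smul_eq_mul]
  have ha' : a ∈ BR uR (r • m) := by
    intro a'
    rw [e, e]
    exact mul_le_mul_of_nonneg_left (ha a') r.2
  rw [← h, ← e]
  exact wT_le hS hR ha'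

lemma wT_smul (hS : Continuous fun p : A × Θ => uS p.1 p.2)
    (hR : Continuous fun p : A × Θ => uR p.1 p.2) {r : ℝ≥0} (hr : 0 < r) (m : FiniteMeasure Θ) :
    wT uS uR (r • m) = r * wT uS uR m := by
  apply le_antisymm (wT_smul_le hS hR hr m)
  have := wT_smul_le hS hR (inv_pos.2 hr) (r • m)
  rw [smul_smul, inv_mul_cancel₀ hr.ne', one_smul, NNReal.coe_inv] at this
  rwa [le_inv_mul_iff₀ (by exact_mod_cast hr)] at this


/-- `Reach m c`: some finite splitting of `m` has total value exceeding `c` -/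
inductive Reach (uS uR : A → Θ → ℝ) : FiniteMeasure Θ → ℝ → Prop
  | base (m : FiniteMeasure Θ) (c : ℝ) : c < wT uS uR m → Reach uS uR m c
  | add (m m' : FiniteMeasure Θ) (c c' : ℝ) : Reach uS uR m c → Reach uS uR m' c' →
      Reach uS uR (m + m') (c + c')

/-- value of the best finite splitting -/
noncomputable def WW (uS uR : A → Θ → ℝ) (m : FiniteMeasure Θ) : ℝ :=
  sSup {c | Reach uS uR m c}


lemma reach_le (hS : Continuous fun p : A × Θ => uS p.1 p.2)
    (hR : Continuous fun p : A × Θ => uR p.1 p.2) {M : ℝ} (hM : ∀ a θ, |uS a θ| ≤ M) {m : FiniteMeasure Θ} {c : ℝ}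
    (h : Reach uS uR m c) : c ≤ M * m.mass := by
  induction h with
  | base m c h => exact h.le.trans (abs_le.1 (wT_bound hS hR hM m)).2
  | add m m' c c' _ _ h1 h2 =>
    have : ((m + m').mass : ℝ) = m.mass + m'.mass := by
      simp [FiniteMeasure.mass, FiniteMeasure.coeFn_add]
    rw [this, mul_add]
    exact add_le_add h1 h2

lemma reach_open (hS : Continuous fun p : A × Θ => uS p.1 p.2)
    (hR : Continuous fun p : A × Θ => uR p.1 p.2) {m : FiniteMeasure Θ} {c : ℝ}
    (h : Reach uS uR m c) : ∀ᶠ m' in 𝓝 m, Reach uS uR m' c := by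
  induction h with
  | base m c h =>
    filter_upwards [wT_lsc hS hR m c h] with m' hm' using Reach.base _ _ hm'
  | add m m' c c' _ _ h1 h2 =>
    obtain ⟨U, hU, hUo, hmU⟩ := eventually_nhds_iff.1 h1
    obtain ⟨U', hU', hUo', hmU'⟩ := eventually_nhds_iff.1 h2
    filter_upwards [add_open m m' hUo hUo' hmU hmU'] with x hx
    obtain ⟨a, ha, b, hb, rfl⟩ := hx
    exact Reach.add _ _ _ _ (hU a ha) (hU' b hb)

lemma reach_smul (hS : Continuous fun p : A × Θ => uS p.1 p.2)
    (hR : Continuous fun p : A × Θ => uR p.1 p.2) {m : FiniteMeasure Θ} {c : ℝ} {r : ℝ≥0} (hr : 0 < r)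
    (h : Reach uS uR m c) : Reach uS uR (r • m) (r * c) := by
  induction h with
  | base m c h =>
    apply Reach.base
    rw [wT_smul hS hR hr]
    exact mul_lt_mul_of_pos_left h (by exact_mod_cast hr)
  | add m m' c c' _ _ h1 h2 =>
    rw [smul_add, mul_add]
    exact Reach.add _ _ _ _ h1 h2

lemma reach_bdd (hS : Continuous fun p : A × Θ => uS p.1 p.2)
    (hR : Continuous fun p : A × Θ => uR p.1 p.2) {M : ℝ} (hM : ∀ a θ, |uS a θ| ≤ M) (m : FiniteMeasure Θ) :
    BddAbove {c | Reach uS uR m c} := ⟨M * m.mass, fun _ h => reach_le hS hR hM h⟩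

lemma reach_ne (m : FiniteMeasure Θ) : {c | Reach uS uR m c}.Nonempty :=
  ⟨wT uS uR m - 1, Reach.base _ _ (by linarith)⟩

lemma wT_le_WW (hS : Continuous fun p : A × Θ => uS p.1 p.2)
    (hR : Continuous fun p : A × Θ => uR p.1 p.2) {M : ℝ} (hM : ∀ a θ, |uS a θ| ≤ M) (m : FiniteMeasure Θ) :
    wT uS uR m ≤ WW uS uR m := by
  apply le_of_forall_lt
  intro c hc
  obtain ⟨d, hd, hd2⟩ := exists_between hc
  exact hd.trans_le (le_csSup (reach_bdd hS hR hM m) (Reach.base _ _ hd2))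

lemma WW_smul_le (hS : Continuous fun p : A × Θ => uS p.1 p.2)
    (hR : Continuous fun p : A × Θ => uR p.1 p.2) {M : ℝ} (hM : ∀ a θ, |uS a θ| ≤ M) {r : ℝ≥0} (hr : 0 < r)
    (m : FiniteMeasure Θ) : r * WW uS uR m ≤ WW uS uR (r • m) := by
  have hr' : (0 : ℝ) < r := by exact_mod_cast hr
  rw [← le_inv_mul_iff₀ hr']
  apply csSup_le (reach_ne m)
  intro c hc
  rw [le_inv_mul_iff₀ hr']
  exact le_csSup (reach_bdd hS hR hM _) (reach_smul hS hR hr hc)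

lemma WW_good (hS : Continuous fun p : A × Θ => uS p.1 p.2)
    (hR : Continuous fun p : A × Θ => uR p.1 p.2) {M : ℝ} (hM : ∀ a θ, |uS a θ| ≤ M) : Good M (WW uS uR : FiniteMeasure Θ → ℝ) := by
  have hb : ∀ m, |WW uS uR m| ≤ M * m.mass := by
    intro m
    refine abs_le.2 ⟨?_, csSup_le (reach_ne m) fun c h => reach_le hS hR hM h⟩
    exact (abs_le.1 (wT_bound hS hR hM m)).1.trans (wT_le_WW hS hR hM m)
  refine ⟨?_, ?_, ?_, hb⟩
  · intro m c hc
    obtain ⟨d, hd, hcd⟩ := exists_lt_of_lt_csSup (reach_ne m) hc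
    filter_upwards [reach_open hS hR hd] with m' hm'
    exact hcd.trans_le (le_csSup (reach_bdd hS hR hM _) hm')
  · intro m m'
    rw [← le_sub_iff_add_le]
    apply csSup_le (reach_ne m)
    intro c hc
    rw [le_sub_comm]
    apply csSup_le (reach_ne m')
    intro c' hc'
    rw [le_sub_iff_add_le, add_comm]
    exact le_csSup (reach_bdd hS hR hM _) (Reach.add _ _ _ _ hc hc')
  · intro r m
    rcases eq_or_ne r 0 with rfl | h0
    · have := hb (0 : FiniteMeasure Θ)
      simp at this
      simp [this]
    · have hr : 0 < r := pos_iff_ne_zero.2 h0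
      refine le_antisymm ?_ (WW_smul_le hS hR hM hr m)
      have := WW_smul_le hS hR hM (inv_pos.2 hr) (r • m)
      rw [smul_smul, inv_mul_cancel₀ hr.ne', one_smul, NNReal.coe_inv] at this
      rwa [inv_mul_le_iff₀ (by exact_mod_cast hr)] at this

lemma wFun_meas (hS : Continuous fun p : A × Θ => uS p.1 p.2)
    (hR : Continuous fun p : A × Θ => uR p.1 p.2) : Measurable (wFun uS uR : ProbabilityMeasure Θ → ℝ) := by
  have : LowerSemicontinuous (wFun uS uR : ProbabilityMeasure Θ → ℝ) :=
    fun x y hy => (ProbabilityMeasure.toFiniteMeasure_continuous.tendsto x).eventually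
      (wT_lsc hS hR x.toFiniteMeasure y hy)
  exact this.measurable

lemma wFun_bound (hS : Continuous fun p : A × Θ => uS p.1 p.2)
    (hR : Continuous fun p : A × Θ => uR p.1 p.2) {M : ℝ} (hM : ∀ a θ, |uS a θ| ≤ M) (x : ProbabilityMeasure Θ) :
    |wFun uS uR x| ≤ M := by
  simpa [wFun_eq] using wT_bound hS hR hM x.toFiniteMeasure

lemma wFun_int (hS : Continuous fun p : A × Θ => uS p.1 p.2)
    (hR : Continuous fun p : A × Θ => uR p.1 p.2) {M : ℝ} (hM : ∀ a θ, |uS a θ| ≤ M) (Q : Measure (ProbabilityMeasure Θ))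
    [IsFiniteMeasure Q] : Integrable (wFun uS uR) Q :=
  Integrable.of_bound (wFun_meas hS hR).aestronglyMeasurable M
    (Eventually.of_forall fun x => wFun_bound hS hR hM x)

lemma reach_policy (hS : Continuous fun p : A × Θ => uS p.1 p.2)
    (hR : Continuous fun p : A × Θ => uR p.1 p.2) [Nonempty Θ] {M : ℝ} (hM : ∀ a θ, |uS a θ| ≤ M) {m : FiniteMeasure Θ} {c : ℝ}
    (h : Reach uS uR m c) : ∃ Q : Measure (ProbabilityMeasure Θ), IsFiniteMeasure Q ∧
      (∀ B : Set Θ, MeasurableSet B → ∫⁻ x, (x : Measure Θ) B ∂Q = (m : Measure Θ) B) ∧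
      c ≤ ∫ x, wFun uS uR x ∂Q := by
  induction h with
  | base m c h =>
    refine ⟨m.mass • Measure.dirac m.normalize, inferInstance, ?_, ?_⟩
    · intro B hB
      rw [lintegral_smul_measure, lintegral_dirac' _ (measurable_ev hB)]
      conv_rhs => rw [m.self_eq_mass_smul_normalize]
      rfl
    · rw [integral_smul_nnreal_measure, integral_dirac' _ _ (wFun_meas hS hR).stronglyMeasurable,
        NNReal.smul_def, smul_eq_mul, wFun_eq]
      rcases eq_or_ne m.mass 0 with h0 | h0
      · have := wT_bound hS hR hM m
        rw [h0] at this ⊢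
        simp at this
        simp; linarith
      · rw [← wT_smul hS hR (pos_iff_ne_zero.2 h0), ← m.self_eq_mass_smul_normalize]
        exact h.le
  | add m m' c c' _ _ h1 h2 =>
    obtain ⟨Q, hQ, hQ1, hQ2⟩ := h1
    obtain ⟨Q', hQ', hQ1', hQ2'⟩ := h2
    refine ⟨Q + Q', inferInstance, ?_, ?_⟩
    · intro B hB
      rw [lintegral_add_measure, hQ1 B hB, hQ1' B hB]; rfl
    · rw [integral_add_measure (wFun_int hS hR hM Q) (wFun_int hS hR hM Q')]
      exact add_le_add hQ2 hQ2'

lemma WW_le_wHat (hS : Continuous fun p : A × Θ => uS p.1 p.2)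
    (hR : Continuous fun p : A × Θ => uR p.1 p.2) [Nonempty Θ] {M : ℝ} (hM : ∀ a θ, |uS a θ| ≤ M) (x : ProbabilityMeasure Θ) :
    WW uS uR x.toFiniteMeasure ≤ wHat uS uR x := by
  apply csSup_le (reach_ne _)
  intro c hc
  obtain ⟨Q, hQ, h1, h2⟩ := reach_policy hS hR hM hc
  have hprob : IsProbabilityMeasure Q := by
    constructor
    have := h1 Set.univ MeasurableSet.univ
    simpa using this
  refine h2.trans (le_csSup ?_ ⟨⟨Q, hprob⟩, (info_iff _ _).2 h1, rfl⟩)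
  refine ⟨M, ?_⟩
  rintro _ ⟨p, -, rfl⟩
  have := norm_integral_le_of_norm_le_const (μ := (p : Measure (ProbabilityMeasure Θ)))
    (f := wFun uS uR) (C := M)
    (Eventually.of_forall fun x => wFun_bound hS hR hM x)
  rw [probReal_univ, mul_one] at this
  exact (le_abs_self _).trans this

lemma wHat_le_WW (hS : Continuous fun p : A × Θ => uS p.1 p.2)
    (hR : Continuous fun p : A × Θ => uR p.1 p.2) {M : ℝ} (hM : ∀ a θ, |uS a θ| ≤ M) (x : ProbabilityMeasure Θ) :
    wHat uS uR x ≤ WW uS uR x.toFiniteMeasure := by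
  have hG := WW_good hS hR hM
  apply csSup_le
  · refine Set.Nonempty.image _ ⟨⟨Measure.dirac x, inferInstance⟩, (info_iff _ _).2 ?_⟩
    intro B hB
    exact lintegral_dirac' _ (measurable_ev hB)
  · rintro _ ⟨p, hp, rfl⟩
    refine le_trans ?_ (jensen hG hp)
    refine integral_mono (wFun_int hS hR hM _) ?_ fun y => wT_le_WW hS hR hM y.toFiniteMeasure
    refine Integrable.of_bound hG.meas.aestronglyMeasurable M (Eventually.of_forall fun y => ?_)
    simpa using hG.bound y.toFiniteMeasure

end value

section final
variable {Θ : Type*} [TopologicalSpace Θ] [CompactSpace Θ] [TopologicalSpace.MetrizableSpace Θ]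
  [MeasurableSpace Θ] [BorelSpace Θ]

lemma mass_add' (m m' : FiniteMeasure Θ) : (m + m').mass = m.mass + m'.mass := by
  simp [FiniteMeasure.mass, FiniteMeasure.coeFn_add]

lemma mass_smul' (r : ℝ≥0) (m : FiniteMeasure Θ) : (r • m).mass = r * m.mass := by
  simp [FiniteMeasure.mass, FiniteMeasure.coeFn_smul]

/-- perturbed functional -/
noncomputable def Vp (W : FiniteMeasure Θ → ℝ) (M : ℝ) (μ0 : FiniteMeasure Θ) (k l : ℝ≥0)
    (m : FiniteMeasure Θ) : ℝ :=
  W ((1 - l) • m + (m.mass * k) • μ0) + M * k * m.mass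

lemma Vp_good {M : ℝ} (hM0 : 0 ≤ M) {W : FiniteMeasure Θ → ℝ} (hW : Good M W)
    {μ0 : FiniteMeasure Θ} (h0 : μ0.mass = 1) {k l : ℝ≥0} (hk : k ≤ 1) :
    Good (3 * M) (Vp W M μ0 k l) := by
  refine ⟨?_, ?_, ?_, ?_⟩
  · have hc : Continuous (fun m : FiniteMeasure Θ => (1 - l) • m + (m.mass * k) • μ0) := by
      have : Continuous fun m : FiniteMeasure Θ => m.mass := FiniteMeasure.continuous_mass
      fun_prop
    have hc2 : Continuous (fun m : FiniteMeasure Θ => M * k * (m.mass : ℝ)) := by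
      have : Continuous fun m : FiniteMeasure Θ => m.mass := FiniteMeasure.continuous_mass
      fun_prop
    exact (hW.lsc.comp hc).add hc2.lowerSemicontinuous
  · intro m m'
    have e : (1 - l) • (m + m') + ((m + m').mass * k) • μ0 =
        ((1 - l) • m + (m.mass * k) • μ0) + ((1 - l) • m' + (m'.mass * k) • μ0) := by
      rw [mass_add', smul_add, add_mul, add_smul]; abel
    have := hW.add ((1 - l) • m + (m.mass * k) • μ0) ((1 - l) • m' + (m'.mass * k) • μ0)
    unfold Vp
    rw [e, mass_add']
    push_cast
    linarith
  · intro r m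
    have e : (1 - l) • (r • m) + ((r • m).mass * k) • μ0 =
        r • ((1 - l) • m + (m.mass * k) • μ0) := by
      rw [mass_smul', smul_add, smul_smul, smul_smul, smul_smul, mul_comm (1 - l) r, mul_assoc]
    unfold Vp
    rw [e, hW.smul, mass_smul']
    push_cast
    ring
  · intro m
    unfold Vp
    have h1 := hW.bound ((1 - l) • m + (m.mass * k) • μ0)
    rw [mass_add', mass_smul', mass_smul', h0] at h1
    push_cast at h1
    have hk' : (k : ℝ) ≤ 1 := by exact_mod_cast hk
    have hl' : ((1 - l : ℝ≥0) : ℝ) ≤ 1 := by exact_mod_cast tsub_le_self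
    have hm : (0 : ℝ) ≤ m.mass := m.mass.2
    have hMm : 0 ≤ M * m.mass := mul_nonneg hM0 hm
    have h2 : |M * k * (m.mass : ℝ)| = M * k * m.mass :=
      abs_of_nonneg (mul_nonneg (mul_nonneg hM0 k.2) hm)
    have h3 := abs_add_le (W ((1 - l) • m + (m.mass * k) • μ0)) (M * k * (m.mass : ℝ))
    have h4 := mul_le_mul_of_nonneg_left hk' hMm
    have h5 := mul_le_mul_of_nonneg_left hl' hMm
    rw [h2] at h3
    nlinarith

lemma Vp_prior {M : ℝ} {W : FiniteMeasure Θ → ℝ} (hW : Good M W)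
    {μ0 : FiniteMeasure Θ} (h0 : μ0.mass = 1) (k l : ℝ≥0) :
    Vp W M μ0 k l μ0 = ((1 - l : ℝ≥0) + k) * W μ0 + M * k := by
  unfold Vp
  rw [h0, one_mul, ← add_smul, hW.smul]
  push_cast
  ring

/-- the key inequality -/
lemma Vp_ge {M : ℝ} (hM0 : 0 ≤ M) {W : FiniteMeasure Θ → ℝ} (hW : Good M W)
    {μ0 x μ ν : ProbabilityMeasure Θ} {k l : ℝ≥0}
    (hle : (l : ℝ≥0∞) • (μ : Measure Θ) ≤ (k : ℝ≥0∞) • (μ0 : Measure Θ))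
    (hν : (ν : Measure Θ) = (l : ℝ≥0∞) • (μ : Measure Θ) + ((1 - l : ℝ≥0) : ℝ≥0∞) • (x : Measure Θ)) :
    W ν.toFiniteMeasure ≤ Vp W M μ0.toFiniteMeasure k l x.toFiniteMeasure := by
  have hf : IsFiniteMeasure ((k : ℝ≥0∞) • (μ0 : Measure Θ) - (l : ℝ≥0∞) • (μ : Measure Θ)) := by
    have : IsFiniteMeasure ((k : ℝ≥0∞) • (μ0 : Measure Θ)) := 
      Measure.smul_finite _ ENNReal.coe_ne_top
    exact isFiniteMeasure_of_le _ Measure.sub_le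
  have hf2 : IsFiniteMeasure ((l : ℝ≥0∞) • (μ : Measure Θ)) := 
      Measure.smul_finite _ ENNReal.coe_ne_top
  let r : FiniteMeasure Θ := ⟨(k : ℝ≥0∞) • (μ0 : Measure Θ) - (l : ℝ≥0∞) • (μ : Measure Θ), hf⟩
  have hr : r + l • μ.toFiniteMeasure = k • μ0.toFiniteMeasure := by
    apply Subtype.ext
    exact Measure.sub_add_cancel_of_le hle
  have hν' : ν.toFiniteMeasure = l • μ.toFiniteMeasure + (1 - l) • x.toFiniteMeasure :=
    Subtype.ext hν
  have hmass : (r.mass : ℝ) ≤ k := by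
    have := congrArg FiniteMeasure.mass hr
    rw [mass_add', mass_smul', mass_smul'] at this
    simp at this
    have h2 : r.mass ≤ k := by rw [← this]; exact le_self_add
    exact_mod_cast h2
  have e : (1 - l) • x.toFiniteMeasure + (x.toFiniteMeasure.mass * k) • μ0.toFiniteMeasure =
      ν.toFiniteMeasure + r := by
    rw [ProbabilityMeasure.mass_toFiniteMeasure, one_mul, ← hr, hν']; abel
  unfold Vp
  rw [e, ProbabilityMeasure.mass_toFiniteMeasure]
  have h1 := hW.add ν.toFiniteMeasure r
  have h2 := (abs_le.1 (hW.bound r)).1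
  have h3 := mul_le_mul_of_nonneg_left hmass hM0
  push_cast
  linarith

lemma final_aux {M : ℝ} (hM0 : 0 ≤ M) {W : FiniteMeasure Θ → ℝ} (hW : Good M W)
    {μ0 : ProbabilityMeasure Θ} {D : Set (ProbabilityMeasure Θ)} (hDm : MeasurableSet D)
    {p : ProbabilityMeasure (ProbabilityMeasure Θ)} (hp : p ∈ infoPolicies μ0)
    (hpD : (p : Measure (ProbabilityMeasure Θ)) D = 1)
    {f : ProbabilityMeasure Θ → ℝ} (hfm : Measurable f) (hfb : ∃ C : ℝ, ∀ μ, |f μ| ≤ C)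
    (h : ∀ mubar ∈ D, ∃ (μ : ProbabilityMeasure Θ) (γ : ℝ), 0 < γ ∧ γ < 1 ∧
      scaledLE γ μ μ0 ∧
      ∃ lam0 : ℝ, 0 < lam0 ∧ lam0 ≤ 1 ∧ ∀ lam : ℝ, 0 < lam → lam ≤ lam0 →
        ∀ ν : ProbabilityMeasure Θ,
          (ν : Measure Θ) = ENNReal.ofReal lam • (μ : Measure Θ) +
            ENNReal.ofReal (1 - lam) • (mubar : Measure Θ) →
          f mubar < W ν.toFiniteMeasure) :
    ∫ ν, f ν ∂(p : Measure (ProbabilityMeasure Θ)) ≤ W μ0.toFiniteMeasure := by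
  obtain ⟨C, hC⟩ := hfb
  let k : ℕ → ℝ≥0 := fun n => 1 / ((n : ℝ≥0) + 1)
  have hk0 : ∀ n, 0 < k n := fun n => by positivity
  have hk1 : ∀ n, k n ≤ 1 := fun n => by
    apply div_le_one_of_le₀ <;> simp
  have hkt : Tendsto k atTop (𝓝 0) := tendsto_one_div_add_atTop_nhds_zero_nat
  have hkt' : Tendsto (fun n => (k n : ℝ)) atTop (𝓝 0) := NNReal.tendsto_coe.2 hkt
  let V : ℕ → FiniteMeasure Θ → ℝ := fun n => Vp W M μ0.toFiniteMeasure (k n) (k n * k n)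
  have hV : ∀ n, Good (3 * M) (V n) := fun n =>
    Vp_good hM0 hW (by simp) (hk1 n)
  have hVb : ∀ n (x : ProbabilityMeasure Θ), |V n x.toFiniteMeasure| ≤ 3 * M := fun n x => by
    simpa using (hV n).bound x.toFiniteMeasure
  have hev : ∀ x ∈ D, ∀ᶠ n in atTop, f x < V n x.toFiniteMeasure := by
    intro x hx
    obtain ⟨μ, γ, hγ, -, hsc, lam0, hl0, -, hlam⟩ := h x hx
    filter_upwards [hkt'.eventually (gt_mem_nhds hγ), hkt'.eventually (gt_mem_nhds hl0)]
      with n h1 h2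
    have hk0' : (0 : ℝ) < k n := by exact_mod_cast hk0 n
    have hk1' : (k n : ℝ) ≤ 1 := by exact_mod_cast hk1 n
    have hl1 : k n * k n ≤ 1 := mul_le_one' (hk1 n) (hk1 n)
    let l := k n * k n
    have hsum : (l : ℝ≥0∞) + ((1 - l : ℝ≥0) : ℝ≥0∞) = 1 := by
      rw [← ENNReal.coe_add, add_tsub_cancel_of_le hl1]; rfl
    have hprob : IsProbabilityMeasure ((l : ℝ≥0∞) • (μ : Measure Θ) +
        ((1 - l : ℝ≥0) : ℝ≥0∞) • (x : Measure Θ)) := by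
      constructor
      simpa using hsum
    let ν : ProbabilityMeasure Θ := ⟨_, hprob⟩
    have e1 : ENNReal.ofReal (l : ℝ) = (l : ℝ≥0∞) := ENNReal.ofReal_coe_nnreal
    have e2 : ENNReal.ofReal (1 - (l : ℝ)) = ((1 - l : ℝ≥0) : ℝ≥0∞) := by
      rw [← ENNReal.ofReal_coe_nnreal, NNReal.coe_sub hl1]; rfl
    have hlt : f x < W ν.toFiniteMeasure := by
      apply hlam (l : ℝ)
      · simp only [l, NNReal.coe_mul]; positivity
      · simp only [l, NNReal.coe_mul]; nlinarith
      · rw [e1, e2]; rfl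
    refine hlt.trans_le (Vp_ge hM0 hW (μ := μ) ?_ rfl)
    refine Measure.le_iff.2 fun E hE => ?_
    have h3 := hsc E hE
    have h4 : ((k n : ℝ≥0) : ℝ≥0∞) ≤ ENNReal.ofReal γ := by
      rw [← ENNReal.ofReal_coe_nnreal]; exact ENNReal.ofReal_le_ofReal h1.le
    simp only [Measure.smul_apply, smul_eq_mul, ENNReal.coe_mul, mul_assoc]
    gcongr
    exact (mul_le_mul_left h4 _).trans h3
  have hae : ∀ᵐ x ∂(p : Measure (ProbabilityMeasure Θ)), x ∈ D :=
    (prob_compl_eq_zero_iff hDm).2 hpD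
  have hmeas : ∀ n, Measurable fun x : ProbabilityMeasure Θ => min (f x) (V n x.toFiniteMeasure) :=
    fun n => hfm.min (hV n).meas
  have hb : ∀ n (x : ProbabilityMeasure Θ), ‖min (f x) (V n x.toFiniteMeasure)‖ ≤ C + 3 * M := by
    intro n x
    have h1 := abs_le.1 (hC x)
    have h2 := abs_le.1 (hVb n x)
    have hC0 := (abs_nonneg _).trans (hC x)
    rw [Real.norm_eq_abs, abs_le]
    refine ⟨le_min ?_ ?_, (min_le_left _ _).trans ?_⟩ <;> linarith
  have hlim : Tendsto (fun n => ∫ x, min (f x) (V n x.toFiniteMeasure)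
      ∂(p : Measure (ProbabilityMeasure Θ))) atTop (𝓝 (∫ x, f x
      ∂(p : Measure (ProbabilityMeasure Θ)))) := by
    refine tendsto_integral_of_dominated_convergence (fun _ => C + 3 * M)
      (fun n => (hmeas n).aestronglyMeasurable) (integrable_const _)
      (fun n => Eventually.of_forall (hb n)) ?_
    filter_upwards [hae] with x hx
    refine tendsto_const_nhds.congr' ?_
    filter_upwards [hev x hx] with n hn
    exact (min_eq_left hn.le).symm
  have hlim2 : Tendsto (fun n => V n μ0.toFiniteMeasure) atTop (𝓝 (W μ0.toFiniteMeasure)) := by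
    have e : ∀ n, V n μ0.toFiniteMeasure =
        ((1 - (k n : ℝ) * k n) + k n) * W μ0.toFiniteMeasure + M * k n := by
      intro n
      have := Vp_prior hW (μ0 := μ0.toFiniteMeasure) (by simp) (k n) (k n * k n)
      rw [NNReal.coe_sub (mul_le_one' (hk1 n) (hk1 n))] at this
      exact_mod_cast this
    simp only [e]
    have := ((((hkt'.mul hkt').const_sub 1).add hkt').mul_const (W μ0.toFiniteMeasure)).add
      (hkt'.const_mul M)
    simpa using this
  refine le_of_tendsto_of_tendsto' hlim hlim2 fun n => ?_
  refine le_trans ?_ (jensen (hV n) hp)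
  refine integral_mono ?_ ?_ fun x => min_le_right _ _
  · exact Integrable.of_bound (hmeas n).aestronglyMeasurable _ (Eventually.of_forall (hb n))
  · exact Integrable.of_bound (hV n).meas.aestronglyMeasurable _ (Eventually.of_forall (hVb n))

end final

end Persuade

/-- If `p ∈ I(μ0)` is supported on a Borel set `D`, `f` is bounded measurable, and each
`mubar ∈ D` admits `μ` and `γ ∈ (0,1)` with `γμ ≤ μ0` such that
`ŵ(λμ + (1−λ)mubar) > f(mubar)` for all sufficiently small `λ ∈ (0,1]`,
then `ŵ(μ0) ≥ ∫ f dp`. -/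
theorem wHat_ge_integral_of_prior_perturbation
    {A Θ : Type*}
    [TopologicalSpace A] [CompactSpace A] [TopologicalSpace.MetrizableSpace A] [Nonempty A]
    [MeasurableSpace A] [BorelSpace A]
    [TopologicalSpace Θ] [CompactSpace Θ] [TopologicalSpace.MetrizableSpace Θ] [Nonempty Θ]
    [MeasurableSpace Θ] [BorelSpace Θ]
    (uS uR : A → Θ → ℝ)
    (hS : Continuous fun p : A × Θ => uS p.1 p.2)
    (hR : Continuous fun p : A × Θ => uR p.1 p.2)
    (μ0 : ProbabilityMeasure Θ)
    (D : Set (ProbabilityMeasure Θ)) (hDm : MeasurableSet D)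
    (p : ProbabilityMeasure (ProbabilityMeasure Θ)) (hp : p ∈ infoPolicies μ0)
    (hpD : (p : Measure (ProbabilityMeasure Θ)) D = 1)
    (f : ProbabilityMeasure Θ → ℝ) (hfm : Measurable f) (hfb : ∃ C : ℝ, ∀ μ, |f μ| ≤ C)
    (h : ∀ mubar ∈ D, ∃ (μ : ProbabilityMeasure Θ) (γ : ℝ), 0 < γ ∧ γ < 1 ∧
      scaledLE γ μ μ0 ∧
      ∃ lam0 : ℝ, 0 < lam0 ∧ lam0 ≤ 1 ∧ ∀ lam : ℝ, 0 < lam → lam ≤ lam0 →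
        ∀ ν : ProbabilityMeasure Θ,
          (ν : Measure Θ) = ENNReal.ofReal lam • (μ : Measure Θ) +
            ENNReal.ofReal (1 - lam) • (mubar : Measure Θ) →
          f mubar < wHat uS uR ν) :
    ∫ ν, f ν ∂(p : Measure (ProbabilityMeasure Θ)) ≤ wHat uS uR μ0 := by
  obtain ⟨M, hM⟩ : ∃ M, ∀ a θ, |uS a θ| ≤ M := by
    obtain ⟨M, hM⟩ := (isCompact_range hS.abs).bddAbove
    exact ⟨M, fun a θ => hM ⟨(a, θ), rfl⟩⟩
  have hM0 : 0 ≤ M :=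
    (abs_nonneg _).trans (hM (Classical.arbitrary A) (Classical.arbitrary Θ))
  refine le_trans ?_ (Persuade.WW_le_wHat hS hR hM μ0)
  refine Persuade.final_aux hM0 (Persuade.WW_good hS hR hM) hDm hp hpD hfm hfb ?_
  intro x hx
  obtain ⟨μ, γ, h1, h2, h3, lam0, h4, h5, h6⟩ := h x hx
  exact ⟨μ, γ, h1, h2, h3, lam0, h4, h5, fun lam h7 h8 ν hν =>
    (h6 lam h7 h8 ν hν).trans_le (Persuade.wHat_le_WW hS hR hM ν)⟩
end

section
/- Suppose A, Θ ⊆ ℝ; u_R exhibits strictly increasing differences; every μ ∈ ΔΘ admits some a ∈ { min A*_R(μ), max A*_R(μ) } such that ∫ u_S(a,θ) dμ(θ) = v(μ); and for each θ̄ ∈ { min supp μ0, max supp μ0 }, either μ0({θ̄}) = 0 or A*_R(δ_{θ̄}) is a singleton (δ_{θ̄} the point mass at θ̄). Then ŵ(μ0) = v̂(μ0), i.e., the sender has a unique equilibrium payoff. -/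
open MeasureTheory


/-- The (topological) support of a probability measure. -/
def msupport {Θ : Type*} [MeasurableSpace Θ] [TopologicalSpace Θ]
    (μ : ProbabilityMeasure Θ) : Set Θ :=
  {θ | ∀ U : Set Θ, IsOpen U → θ ∈ U → (μ : Measure Θ) U ≠ 0}

/-- The point mass at `x` as a probability measure. -/
noncomputable def diracPM {X : Type*} [MeasurableSpace X] (x : X) : ProbabilityMeasure X :=
  ⟨MeasureTheory.Measure.dirac x, MeasureTheory.Measure.dirac.isProbabilityMeasure⟩


set_option linter.unusedSectionVars false

section Aux

open ProbabilityTheory Filter Topology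

variable {A Θ : Type*} [MetricSpace A] [CompactSpace A] [Nonempty A]
  [MetricSpace Θ] [CompactSpace Θ] [MeasurableSpace Θ] [BorelSpace Θ]

theorem pm_coe_measurable {Ω : Type*} [MeasurableSpace Ω] :
    Measurable (fun μ : ProbabilityMeasure Ω => (μ : Measure Ω)) :=
  comap_measurable _

/-- The tautological kernel. -/
noncomputable def kId (Ω : Type*) [MeasurableSpace Ω] : Kernel (ProbabilityMeasure Ω) Ω :=
  ⟨fun μ => (μ : Measure Ω), pm_coe_measurable⟩

instance kId_markov (Ω : Type*) [MeasurableSpace Ω] : IsMarkovKernel (kId Ω) :=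
  ⟨fun μ => μ.2⟩

theorem pm_measurable_of {X Ω : Type*} [MeasurableSpace X] [MeasurableSpace Ω]
    {f : X → ProbabilityMeasure Ω}
    (h : ∀ B : Set Ω, MeasurableSet B → Measurable fun x => (f x : Measure Ω) B) :
    Measurable f :=
  measurable_comap_iff.2 (Measure.measurable_of_measurable_coe _ h)

theorem eval_measurable {Ω : Type*} [MeasurableSpace Ω] {B : Set Ω} (hB : MeasurableSet B) :
    Measurable fun x : ProbabilityMeasure Ω => (x : Measure Ω) B :=
  (Measure.measurable_coe hB).comp pm_coe_measurable

theorem cont_integrable {g : Θ → ℝ} (hg : Continuous g) (μ : Measure Θ) [IsFiniteMeasure μ] :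
    Integrable g μ :=
  hg.integrable_of_hasCompactSupport (HasCompactSupport.of_compactSpace g)

theorem EU_measurable {f : A → Θ → ℝ} (hf : Continuous fun p : A × Θ => f p.1 p.2) (a : A) :
    Measurable fun μ : ProbabilityMeasure Θ => ∫ θ, f a θ ∂(μ : Measure Θ) := by
  have h : Continuous (f a) := hf.comp (by fun_prop : Continuous fun θ : Θ => (a, θ))
  exact (h.stronglyMeasurable.integral_kernel (κ := kId Θ)).measurable

theorem EU_continuous {f : A → Θ → ℝ} (hf : Continuous fun p : A × Θ => f p.1 p.2)
    (μ : Measure Θ) [IsFiniteMeasure μ] :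
    Continuous fun a => ∫ θ, f a θ ∂μ := by
  have := continuous_parametric_integral_of_continuous (μ := μ) (f := f) hf
    (s := Set.univ) isCompact_univ
  simpa using this

theorem exists_bound {f : A → Θ → ℝ} (hf : Continuous fun p : A × Θ => f p.1 p.2) :
    ∃ C, 0 ≤ C ∧ ∀ a θ, |f a θ| ≤ C := by
  obtain ⟨C, hC⟩ := isCompact_univ.exists_bound_of_continuousOn hf.continuousOn
  refine ⟨max C 0, le_max_right _ _, fun a θ => ?_⟩
  exact (hC (a, θ) trivial).trans (le_max_left _ _)

theorem EU_bound {f : A → Θ → ℝ} {C : ℝ} (hC : ∀ a θ, |f a θ| ≤ C) (a : A)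
    (μ : ProbabilityMeasure Θ) : |∫ θ, f a θ ∂(μ : Measure Θ)| ≤ C := by
  have := norm_integral_le_of_norm_le_const (μ := (μ : Measure Θ)) (f := f a) (C := C)
    (Eventually.of_forall fun θ => hC a θ)
  simpa using this

theorem br_nonempty {uR : A → Θ → ℝ} (hR : Continuous fun p : A × Θ => uR p.1 p.2)
    (μ : ProbabilityMeasure Θ) : (bestResponses uR μ).Nonempty := by
  obtain ⟨a, -, ha⟩ := isCompact_univ.exists_isMaxOn Set.univ_nonempty
    (EU_continuous hR (μ : Measure Θ)).continuousOn
  exact ⟨a, fun a' => ha (Set.mem_univ a')⟩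

theorem br_closed {uR : A → Θ → ℝ} (hR : Continuous fun p : A × Θ => uR p.1 p.2)
    (μ : ProbabilityMeasure Θ) : IsClosed (bestResponses uR μ) := by
  have : bestResponses uR μ = ⋂ a' : A, {a | ∫ θ, uR a' θ ∂(μ : Measure Θ)
      ≤ ∫ θ, uR a θ ∂(μ : Measure Θ)} := by
    ext a; simp [bestResponses]
  rw [this]
  exact isClosed_iInter fun a' => isClosed_le continuous_const (EU_continuous hR _)

theorem sEU_continuous {uS : A → Θ → ℝ} (hS : Continuous fun p : A × Θ => uS p.1 p.2)
    (μ : ProbabilityMeasure Θ) : Continuous (senderEU uS μ) :=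
  EU_continuous hS (μ : Measure Θ)

theorem image_compact {uS uR : A → Θ → ℝ} (hS : Continuous fun p : A × Θ => uS p.1 p.2)
    (hR : Continuous fun p : A × Θ => uR p.1 p.2) (μ : ProbabilityMeasure Θ) :
    IsCompact (senderEU uS μ '' bestResponses uR μ) :=
  (br_closed hR μ).isCompact.image (sEU_continuous hS μ)

theorem v_attained {uS uR : A → Θ → ℝ} (hS : Continuous fun p : A × Θ => uS p.1 p.2)
    (hR : Continuous fun p : A × Θ => uR p.1 p.2) (μ : ProbabilityMeasure Θ) :
    ∃ a ∈ bestResponses uR μ, senderEU uS μ a = vFun uS uR μ :=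
  (image_compact hS hR μ).sSup_mem ((br_nonempty hR μ).image _)

theorem w_attained {uS uR : A → Θ → ℝ} (hS : Continuous fun p : A × Θ => uS p.1 p.2)
    (hR : Continuous fun p : A × Θ => uR p.1 p.2) (μ : ProbabilityMeasure Θ) :
    ∃ a ∈ bestResponses uR μ, senderEU uS μ a = wFun uS uR μ :=
  (image_compact hS hR μ).sInf_mem ((br_nonempty hR μ).image _)

theorem le_v {uS uR : A → Θ → ℝ} (hS : Continuous fun p : A × Θ => uS p.1 p.2)
    (hR : Continuous fun p : A × Θ => uR p.1 p.2) (μ : ProbabilityMeasure Θ) {a : A}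
    (ha : a ∈ bestResponses uR μ) : senderEU uS μ a ≤ vFun uS uR μ :=
  le_csSup (image_compact hS hR μ).bddAbove ⟨a, ha, rfl⟩

theorem v_bound {uS uR : A → Θ → ℝ} (hS : Continuous fun p : A × Θ => uS p.1 p.2)
    (hR : Continuous fun p : A × Θ => uR p.1 p.2) {C : ℝ} (hC : ∀ a θ, |uS a θ| ≤ C)
    (μ : ProbabilityMeasure Θ) : |vFun uS uR μ| ≤ C := by
  obtain ⟨a, -, h⟩ := v_attained hS hR μ
  rw [← h]; exact EU_bound hC a μ

theorem w_bound {uS uR : A → Θ → ℝ} (hS : Continuous fun p : A × Θ => uS p.1 p.2)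
    (hR : Continuous fun p : A × Θ => uR p.1 p.2) {C : ℝ} (hC : ∀ a θ, |uS a θ| ≤ C)
    (μ : ProbabilityMeasure Θ) : |wFun uS uR μ| ≤ C := by
  obtain ⟨a, -, h⟩ := w_attained hS hR μ
  rw [← h]; exact EU_bound hC a μ

theorem v_measurable {uS uR : A → Θ → ℝ} (hS : Continuous fun p : A × Θ => uS p.1 p.2)
    (hR : Continuous fun p : A × Θ => uR p.1 p.2) : Measurable (vFun uS uR) := by
  obtain ⟨D, hDc, hD⟩ := TopologicalSpace.exists_countable_dense A
  refine measurable_of_Ici fun c => ?_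
  have key : vFun uS uR ⁻¹' Set.Ici c = ⋂ n : ℕ, ⋃ a ∈ D,
      ({μ : ProbabilityMeasure Θ | c - 1 / ((n : ℝ) + 1) < ∫ θ, uS a θ ∂(μ : Measure Θ)} ∩
      ⋂ a' ∈ D, {μ : ProbabilityMeasure Θ | ∫ θ, uR a' θ ∂(μ : Measure Θ)
        ≤ ∫ θ, uR a θ ∂(μ : Measure Θ) + 1 / ((n : ℝ) + 1)}) := by
    ext μ
    simp only [Set.mem_preimage, Set.mem_Ici, Set.mem_iInter, Set.mem_iUnion, Set.mem_inter_iff,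
      Set.mem_ofPred_eq]
    constructor
    · intro h n
      have hn : (0 : ℝ) < 1 / ((n : ℝ) + 1) := by positivity
      obtain ⟨a0, ha0, hv⟩ := v_attained hS hR μ
      have hopen : IsOpen {a | c - 1 / ((n : ℝ) + 1) < ∫ θ, uS a θ ∂(μ : Measure Θ) ∧
          ∫ θ, uR a0 θ ∂(μ : Measure Θ) - 1 / ((n : ℝ) + 1) < ∫ θ, uR a θ ∂(μ : Measure Θ)} :=
        (isOpen_lt continuous_const (EU_continuous hS _)).inter
          (isOpen_lt continuous_const (EU_continuous hR _))
      obtain ⟨a, ha, haD⟩ := hD.inter_open_nonempty _ hopen ⟨a0, by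
        have : c ≤ ∫ θ, uS a0 θ ∂(μ : Measure Θ) := by
          have h2 : senderEU uS μ a0 = ∫ θ, uS a0 θ ∂(μ : Measure Θ) := rfl
          linarith
        constructor <;> linarith⟩
      exact ⟨a, haD, ha.1, fun a' _ => by linarith [ha0 a', ha.2]⟩
    · intro h
      choose a haD haS haR using h
      obtain ⟨b, -, φ, hφ, hlim⟩ := isCompact_univ.tendsto_subseq (x := a) (fun n => Set.mem_univ _)
      have h0 : Tendsto (fun n => 1 / (((φ n : ℕ) : ℝ) + 1)) atTop (𝓝 0) :=
        tendsto_one_div_add_atTop_nhds_zero_nat.comp hφ.tendsto_atTop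
      have hlS := ((EU_continuous hS (μ : Measure Θ)).tendsto b).comp hlim
      have hlR := ((EU_continuous hR (μ : Measure Θ)).tendsto b).comp hlim
      have h1 : c ≤ ∫ θ, uS b θ ∂(μ : Measure Θ) := by
        have := ge_of_tendsto (hlS.add h0) (b := c)
          (Eventually.of_forall fun n => by
            have := haS (φ n); simp only [Function.comp]; linarith)
        simpa using this
      have h2 : ∀ a' ∈ D, ∫ θ, uR a' θ ∂(μ : Measure Θ) ≤ ∫ θ, uR b θ ∂(μ : Measure Θ) := by
        intro a' ha'
        have := ge_of_tendsto (hlR.add h0) (b := ∫ θ, uR a' θ ∂(μ : Measure Θ))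
          (Eventually.of_forall fun n => by
            have := haR (φ n) a' ha'; simp only [Function.comp]; linarith)
        simpa using this
      have h3 : b ∈ bestResponses uR μ := by
        have hcl : IsClosed {a' | ∫ θ, uR a' θ ∂(μ : Measure Θ) ≤ ∫ θ, uR b θ ∂(μ : Measure Θ)} :=
          isClosed_le (EU_continuous hR _) continuous_const
        intro a'
        have : closure D ⊆ _ := hcl.closure_subset_iff.2 h2
        exact this (hD a')
      exact h1.trans (le_v hS hR μ h3)
  rw [key]
  refine MeasurableSet.iInter fun n => MeasurableSet.biUnion hDc fun a _ => ?_
  refine (measurableSet_lt measurable_const (EU_measurable hS a)).inter ?_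
  exact MeasurableSet.biInter hDc fun a' _ =>
    measurableSet_le (EU_measurable hR a') ((EU_measurable hR a).add_const _)

theorem w_eq_neg_v {uS uR : A → Θ → ℝ} :
    wFun uS uR = fun μ => - vFun (fun a θ => - uS a θ) uR μ := by
  funext μ
  unfold wFun vFun
  rw [Real.sInf_def]
  congr 2
  rw [← Set.image_neg_eq_neg, Set.image_image]
  congr 1
  funext a
  simp [senderEU, integral_neg]

theorem w_measurable {uS uR : A → Θ → ℝ} (hS : Continuous fun p : A × Θ => uS p.1 p.2)
    (hR : Continuous fun p : A × Θ => uR p.1 p.2) : Measurable (wFun uS uR) := by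
  rw [w_eq_neg_v]
  exact (v_measurable hS.neg hR).neg

theorem w_le_v {uS uR : A → Θ → ℝ} (hS : Continuous fun p : A × Θ => uS p.1 p.2)
    (hR : Continuous fun p : A × Θ => uR p.1 p.2) (μ : ProbabilityMeasure Θ) :
    wFun uS uR μ ≤ vFun uS uR μ := by
  obtain ⟨a, ha, h⟩ := w_attained hS hR μ
  rw [← h]; exact le_v hS hR μ ha

theorem tv_bound {N x μ0 : ProbabilityMeasure Θ} {c : ℝ} (hc : 0 ≤ c)
    (hN : (N : Measure Θ) ≤ ENNReal.ofReal (1 + c) • (x : Measure Θ)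
      + ENNReal.ofReal c • (μ0 : Measure Θ))
    {g : Θ → ℝ} (hg : Continuous g) {C : ℝ} (hC : ∀ θ, |g θ| ≤ C) :
    |∫ θ, g θ ∂(N : Measure Θ) - ∫ θ, g θ ∂(x : Measure Θ)| ≤ 4 * c * C := by
  have one : ∀ g : Θ → ℝ, Continuous g → (∀ θ, |g θ| ≤ C) →
      ∫ θ, g θ ∂(N : Measure Θ) - ∫ θ, g θ ∂(x : Measure Θ) ≤ 4 * c * C := by
    intro g hg hC
    have hgc : Continuous fun θ => C + g θ := by fun_prop
    have hfin : ∀ (t : ℝ) (y : ProbabilityMeasure Θ),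
        IsFiniteMeasure (ENNReal.ofReal t • (y : Measure Θ)) := fun t y =>
      Measure.smul_finite _ ENNReal.ofReal_ne_top
    have i1 := hfin (1 + c) x
    have i2 := hfin c μ0
    have h := integral_mono_measure hN (f := fun θ => C + g θ)
      (Eventually.of_forall fun θ => by
        have := (abs_le.1 (hC θ)).1
        simp only [Pi.zero_apply]; linarith)
      (cont_integrable hgc _)
    rw [integral_add_measure (cont_integrable hgc _) (cont_integrable hgc _),
      integral_smul_measure, integral_smul_measure, ENNReal.toReal_ofReal hc,
      ENNReal.toReal_ofReal (by linarith)] at h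
    have e : ∀ y : ProbabilityMeasure Θ, ∫ θ, (C + g θ) ∂(y : Measure Θ)
        = C + ∫ θ, g θ ∂(y : Measure Θ) := fun y => by
      rw [integral_add (integrable_const _) (cont_integrable hg _)]; simp
    rw [e, e, e] at h
    simp only [smul_eq_mul] at h
    have b : ∀ y : ProbabilityMeasure Θ, |∫ θ, g θ ∂(y : Measure Θ)| ≤ C := fun y =>
      EU_bound (A := Unit) (f := fun _ => g) (fun _ => hC) () y
    have b1 := (abs_le.1 (b x)).2
    have b2 := (abs_le.1 (b μ0)).2
    nlinarith [mul_le_mul_of_nonneg_left b1 hc, mul_le_mul_of_nonneg_left b2 hc]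
  rw [abs_le]
  have h1 := one g hg hC
  have h2 := one (fun θ => - g θ) hg.neg (fun θ => by rw [abs_neg]; exact hC θ)
  rw [integral_neg, integral_neg] at h2
  constructor <;> linarith

theorem conv_lemma {uS uR : A → Θ → ℝ} (hS : Continuous fun p : A × Θ => uS p.1 p.2)
    (hR : Continuous fun p : A × Θ => uR p.1 p.2) {x μ0 : ProbabilityMeasure Θ}
    {N : ℕ → ProbabilityMeasure Θ} {c : ℕ → ℝ} (hc0 : ∀ n, 0 ≤ c n)
    (hc : Tendsto c atTop (𝓝 0))
    (hN : ∀ n, (N n : Measure Θ) ≤ ENNReal.ofReal (1 + c n) • (x : Measure Θ)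
      + ENNReal.ofReal (c n) • (μ0 : Measure Θ))
    {a : A} (hv : senderEU uS x a = vFun uS uR x)
    {S : Set A} (hScl : IsClosed S) (hSsub : ∀ n, bestResponses uR (N n) ⊆ S)
    (hSx : S ∩ bestResponses uR x ⊆ {a}) :
    Tendsto (fun n => wFun uS uR (N n)) atTop (𝓝 (vFun uS uR x)) := by
  obtain ⟨CS, hCS0, hCS⟩ := exists_bound hS
  obtain ⟨CR, hCR0, hCR⟩ := exists_bound hR
  choose b hb hbw using fun n => w_attained hS hR (N n)
  have cont1 : ∀ {f : A → Θ → ℝ}, (Continuous fun p : A × Θ => f p.1 p.2) → ∀ a,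
      Continuous (f a) := fun hf a => hf.comp (by fun_prop : Continuous fun θ : Θ => (a, θ))
  have lim4 : ∀ C : ℝ, Tendsto (fun n => 4 * c n * C) atTop (𝓝 0) := fun C => by
    simpa using (hc.const_mul 4).mul_const C
  have U : ∀ {f : A → Θ → ℝ}, (Continuous fun p : A × Θ => f p.1 p.2) → ∀ {C : ℝ},
      (∀ a θ, |f a θ| ≤ C) → ∀ (y : ℕ → A) (φ : ℕ → ℕ), Tendsto φ atTop atTop → ∀ y0,
      Tendsto y atTop (𝓝 y0) → Tendsto (fun n => ∫ θ, f (y n) θ ∂(N (φ n) : Measure Θ)) atTop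
        (𝓝 (∫ θ, f y0 θ ∂(x : Measure Θ))) := by
    intro f hf C hC y φ hφ y0 hy
    have h1 := ((EU_continuous hf (x : Measure Θ)).tendsto y0).comp hy
    have h2 : Tendsto (fun n => ∫ θ, f (y n) θ ∂(N (φ n) : Measure Θ)
        - ∫ θ, f (y n) θ ∂(x : Measure Θ)) atTop (𝓝 0) :=
      squeeze_zero_norm (fun n => tv_bound (hc0 (φ n)) (hN (φ n)) (cont1 hf (y n)) (hC (y n)))
        ((lim4 C).comp hφ)
    have h3 := h2.add h1
    simp only [Function.comp, sub_add_cancel, zero_add] at h3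
    exact h3
  -- the selected best responses converge along subsequences
  refine tendsto_of_subseq_tendsto fun ns hns => ?_
  obtain ⟨b0, -, φ, hφ, hlim⟩ := isCompact_univ.tendsto_subseq (x := fun n => b (ns n))
    (fun n => Set.mem_univ _)
  refine ⟨φ, ?_⟩
  have hcomp : Tendsto (fun n => ns (φ n)) atTop atTop := hns.comp hφ.tendsto_atTop
  have hb0S : b0 ∈ S := hScl.mem_of_tendsto hlim
    (Eventually.of_forall fun n => hSsub _ (hb _))
  have hb0R : b0 ∈ bestResponses uR x := by
    intro a'
    refine le_of_tendsto_of_tendsto' (U hR hCR (fun _ => a') _ hcomp a' tendsto_const_nhds)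
      (U hR hCR _ _ hcomp b0 hlim) fun n => ?_
    exact hb (ns (φ n)) a'
  have hb0 : b0 = a := hSx ⟨hb0S, hb0R⟩
  rw [← hv, ← hb0]
  have := U hS hCS _ _ hcomp b0 hlim
  refine this.congr fun n => ?_
  exact hbw (ns (φ n))

theorem info_lintegral {Ω : Type*} [MeasurableSpace Ω] {μ0 : ProbabilityMeasure Ω}
    {p : ProbabilityMeasure (ProbabilityMeasure Ω)} :
    p ∈ infoPolicies μ0 ↔ ∀ B : Set Ω, MeasurableSet B →
      ∫⁻ ν, (ν : Measure Ω) B ∂(p : Measure (ProbabilityMeasure Ω)) = (μ0 : Measure Ω) B := by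
  refine forall₂_congr fun B hB => ?_
  rw [integral_toReal (eval_measurable hB).aemeasurable
    (Eventually.of_forall fun ν => measure_lt_top _ _)]
  refine ENNReal.toReal_eq_toReal_iff' ?_ (measure_ne_top _ _)
  have : ∫⁻ ν, (ν : Measure Ω) B ∂(p : Measure (ProbabilityMeasure Ω)) ≤ 
      ∫⁻ ν, 1 ∂(p : Measure (ProbabilityMeasure Ω)) := lintegral_mono fun ν => prob_le_one
  exact ne_top_of_le_ne_top (by simp) this

theorem policy_lemma {Ω : Type*} [MeasurableSpace Ω] {μ0 : ProbabilityMeasure Ω}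
    {p : ProbabilityMeasure (ProbabilityMeasure Ω)} (hp : p ∈ infoPolicies μ0)
    {c : ℝ} (hc : 0 < c) {N : ProbabilityMeasure Ω → ProbabilityMeasure Ω} (hNm : Measurable N)
    (hN : ∀ x, (N x : Measure Ω) ≤ ENNReal.ofReal (1 + c) • (x : Measure Ω)
      + ENNReal.ofReal c • (μ0 : Measure Ω))
    {f : ProbabilityMeasure Ω → ℝ} (hf : Measurable f) {C : ℝ} (hC : ∀ x, |f x| ≤ C) :
    ∃ p' ∈ infoPolicies μ0,
      (1 + 2 * c)⁻¹ * ∫ x, f (N x) ∂(p : Measure (ProbabilityMeasure Ω))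
        - (1 - (1 + 2 * c)⁻¹) * C
      ≤ ∫ x, f x ∂(p' : Measure (ProbabilityMeasure Ω)) := by
  have hp' := info_lintegral.1 hp
  set r : ℝ := (1 + 2 * c)⁻¹ with hr
  have hr0 : 0 < r := by positivity
  have hr1 : r < 1 := inv_lt_one_of_one_lt₀ (by linarith)
  have hNm' : Measurable fun x => (N x : Measure Ω) := pm_coe_measurable.comp hNm
  have hNk : ∀ B, MeasurableSet B → Measurable fun x => (N x : Measure Ω) B := fun B hB =>
    (eval_measurable hB).comp hNm
  set R : ENNReal := ENNReal.ofReal r with hRdef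
  set Rc : ENNReal := ENNReal.ofReal (1 - r) with hRcdef
  have hRR : R + Rc = 1 := by
    rw [← ENNReal.ofReal_add hr0.le (by linarith)]; simp
  have hRc0 : Rc ≠ 0 := by simp [hRcdef, hr1]
  have hRct : Rc ≠ ⊤ := ENNReal.ofReal_ne_top
  set b : Measure Ω := R • (p : Measure (ProbabilityMeasure Ω)).bind (fun x => (N x : Measure Ω))
    with hb
  have hbB : ∀ B, MeasurableSet B → b B =
      R * ∫⁻ x, (N x : Measure Ω) B ∂(p : Measure (ProbabilityMeasure Ω)) := by
    intro B hB
    rw [hb, Measure.smul_apply, Measure.bind_apply hB hNm'.aemeasurable, smul_eq_mul]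
  have hble : b ≤ μ0 := by
    refine Measure.le_iff.2 fun B hB => ?_
    rw [hbB B hB]
    calc R * ∫⁻ x, (N x : Measure Ω) B ∂(p : Measure (ProbabilityMeasure Ω))
        ≤ R * ∫⁻ x, (ENNReal.ofReal (1 + c) * (x : Measure Ω) B
            + ENNReal.ofReal c * (μ0 : Measure Ω) B) ∂(p : Measure (ProbabilityMeasure Ω)) := by
          gcongr with x
          simpa using Measure.le_iff.1 (hN x) B hB
      _ = R * (ENNReal.ofReal (1 + c) * (μ0 : Measure Ω) B
            + ENNReal.ofReal c * (μ0 : Measure Ω) B) := by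
          rw [lintegral_add_right _ measurable_const,
            lintegral_const_mul _ (eval_measurable hB), hp' B hB]
          simp
      _ = (μ0 : Measure Ω) B := by
          rw [← add_mul, ← mul_assoc, ← ENNReal.ofReal_add (by linarith) hc.le,
            ← ENNReal.ofReal_mul hr0.le]
          have : r * (1 + c + c) = 1 := by rw [hr]; field_simp; ring
          rw [this]; simp
  have hbu : b Set.univ = R := by rw [hbB _ MeasurableSet.univ]; simp
  have : IsFiniteMeasure b := ⟨by rw [hbu]; exact ENNReal.ofReal_lt_top⟩
  have hsub := Measure.sub_add_cancel_of_le hble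
  set q : Measure Ω := (μ0 : Measure Ω) - b with hq
  have hqu : q Set.univ = Rc := by
    have h1 : q Set.univ + R = Rc + R := by
      rw [← hbu, ← Measure.add_apply, hsub, hbu, add_comm Rc, hRR]; simp
    exact (ENNReal.add_left_inj ENNReal.ofReal_ne_top).1 h1
  let ρ : ProbabilityMeasure Ω := ⟨Rc⁻¹ • q, ⟨by
    rw [Measure.smul_apply, hqu, smul_eq_mul, ENNReal.inv_mul_cancel hRc0 hRct]⟩⟩
  have hρ : ∀ B, Rc * (ρ : Measure Ω) B = q B := by
    intro B
    change Rc * (Rc⁻¹ • q) B = q B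
    rw [Measure.smul_apply, smul_eq_mul, ← mul_assoc, ENNReal.mul_inv_cancel hRc0 hRct, one_mul]
  let pm : Measure (ProbabilityMeasure Ω) :=
    R • (p : Measure (ProbabilityMeasure Ω)).map N + Rc • Measure.dirac ρ
  have ipm : IsProbabilityMeasure pm := ⟨by
    have := Measure.isProbabilityMeasure_map (μ := (p : Measure (ProbabilityMeasure Ω)))
      hNm.aemeasurable
    simp [pm, hRR]⟩
  refine ⟨⟨pm, ipm⟩, info_lintegral.2 fun B hB => ?_, ?_⟩
  · change ∫⁻ ν, (ν : Measure Ω) B ∂pm = _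
    rw [lintegral_add_measure, lintegral_smul_measure, lintegral_smul_measure,
      lintegral_map (eval_measurable hB) hNm, lintegral_dirac' _ (eval_measurable hB),
      smul_eq_mul, smul_eq_mul, hρ, ← hbB B hB, add_comm, ← Measure.add_apply, hsub]
  · change _ ≤ ∫ x, f x ∂pm
    have hintf : ∀ m : Measure (ProbabilityMeasure Ω), IsFiniteMeasure m → Integrable f m :=
      fun m hm => Integrable.of_bound hf.aestronglyMeasurable C (Eventually.of_forall hC)
    rw [integral_add_measure
      (hintf _ (Measure.smul_finite _ ENNReal.ofReal_ne_top))
      (hintf _ (Measure.smul_finite _ ENNReal.ofReal_ne_top)), integral_smul_measure,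
      integral_smul_measure, integral_map hNm.aemeasurable hf.aestronglyMeasurable,
      integral_dirac' _ _ hf.stronglyMeasurable, ENNReal.toReal_ofReal hr0.le,
      ENNReal.toReal_ofReal (by linarith)]
    simp only [smul_eq_mul]
    have h1 := (abs_le.1 (hC ρ)).1
    nlinarith [mul_le_mul_of_nonneg_left h1 (by linarith : 0 ≤ 1 - r)]

theorem setInt_pos {d : Θ → ℝ} (hd : Continuous d) (m : Measure Θ) [IsFiniteMeasure m]
    {s : Set Θ} (hs : MeasurableSet s) (hm : m s ≠ 0) (hpos : ∀ θ ∈ s, 0 < d θ) :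
    0 < ∫ θ in s, d θ ∂m := by
  rw [setIntegral_pos_iff_support_of_nonneg_ae
    ((ae_restrict_iff' hs).2 (Eventually.of_forall fun θ hθ => (hpos θ hθ).le))
    (cont_integrable hd m).integrableOn]
  have : Function.support d ∩ s = s :=
    Set.inter_eq_right.2 fun θ hθ => (hpos θ hθ).ne'
  rw [this]; exact pos_iff_ne_zero.2 hm

theorem perturb {h : Θ → ℝ} (hh : Continuous h) (hinj : Function.Injective h)
    (μ0 : ProbabilityMeasure Θ) {c : ℝ} (hc : 0 < c) :
    ∃ N : ProbabilityMeasure Θ → ProbabilityMeasure Θ, Measurable N ∧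
      (∀ x, (N x : Measure Θ) ≤ ENNReal.ofReal (1 + c) • (x : Measure Θ)
        + ENNReal.ofReal c • (μ0 : Measure Θ)) ∧
      ∀ x : ProbabilityMeasure Θ, ∀ d : Θ → ℝ, Continuous d →
        (∀ θ θ', h θ < h θ' → d θ < d θ') → 0 ≤ ∫ θ, d θ ∂(x : Measure Θ) →
        ((∀ θ, x ≠ diracPM θ) ∨ ∃ θ, x = diracPM θ ∧ (μ0 : Measure Θ) {θ' | h θ < h θ'} ≠ 0) →
        0 < ∫ θ, d θ ∂(N x : Measure Θ) := by
  obtain ⟨ε, hε0, hε1, hcε1, hcε2⟩ : ∃ ε : ℝ, 0 < ε ∧ ε < 1 ∧ (1 - ε)⁻¹ = 1 + c ∧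
      (1 - ε)⁻¹ * ε = c := by
    refine ⟨c / (1 + c), by positivity, by rw [div_lt_one (by linarith)]; linarith, ?_, ?_⟩
    · have : 1 - c / (1 + c) = (1 + c)⁻¹ := by field_simp; ring
      rw [this, inv_inv]
    · have : 1 - c / (1 + c) = (1 + c)⁻¹ := by field_simp; ring
      rw [this, inv_inv]; field_simp
  set m : ProbabilityMeasure Θ → ℝ := fun x => ∫ θ, h θ ∂(x : Measure Θ) with hmdef
  have hm : Measurable m := (hh.stronglyMeasurable.integral_kernel (κ := kId Θ)).measurable
  have hlowm : MeasurableSet {q : ProbabilityMeasure Θ × Θ | h q.2 < m q.1} :=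
    measurableSet_lt (hh.measurable.comp measurable_snd) (hm.comp measurable_fst)
  have hhighm : MeasurableSet {q : ProbabilityMeasure Θ × Θ | m q.1 < h q.2} :=
    measurableSet_lt (hm.comp measurable_fst) (hh.measurable.comp measurable_snd)
  have hdegm : MeasurableSet {x : ProbabilityMeasure Θ | (x : Measure Θ) {θ | h θ < m x} = 0} := by
    have := Kernel.measurable_kernel_prodMk_left (κ := kId Θ) hlowm
    exact this (measurableSet_singleton 0)
  classical
  set f : ProbabilityMeasure Θ → Θ → ENNReal := fun x θ =>
    if h θ < m x then ENNReal.ofReal (1 - ε) else 1 with hfdef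
  set g : ProbabilityMeasure Θ → Θ → ENNReal := fun x θ =>
    if (x : Measure Θ) {θ | h θ < m x} = 0 ∧ m x < h θ then ENNReal.ofReal ε else 0 with hgdef
  have hfm : Measurable (Function.uncurry f) :=
    Measurable.ite hlowm measurable_const measurable_const
  have hgm : Measurable (Function.uncurry g) :=
    Measurable.ite ((measurable_fst hdegm).inter hhighm) measurable_const measurable_const
  have hfx : ∀ x, Measurable (f x) := fun x => hfm.comp measurable_prodMk_left
  have hgx : ∀ x, Measurable (g x) := fun x => hgm.comp measurable_prodMk_left
  have hε1' : ENNReal.ofReal (1 - ε) ≤ 1 := by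
    rw [ENNReal.ofReal_le_one]; linarith
  have hf1 : ∀ x θ, f x θ ≤ 1 := fun x θ => by
    simp only [hfdef]; split_ifs <;> [exact hε1'; exact le_rfl]
  have hf0 : ∀ x θ, ENNReal.ofReal (1 - ε) ≤ f x θ := fun x θ => by
    simp only [hfdef]; split_ifs <;> [exact le_rfl; exact hε1']
  have hg1 : ∀ x θ, g x θ ≤ ENNReal.ofReal ε := fun x θ => by
    simp only [hgdef]; split_ifs <;> [exact le_rfl; exact zero_le]
  set κ : ProbabilityMeasure Θ → Measure Θ := fun x =>
    (x : Measure Θ).withDensity (f x) + (μ0 : Measure Θ).withDensity (g x) with hκ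
  have hκB : ∀ x B, MeasurableSet B → κ x B = ∫⁻ θ in B, f x θ ∂(x : Measure Θ) +
      ∫⁻ θ in B, g x θ ∂(μ0 : Measure Θ) := fun x B hB => by
    simp only [hκ, Measure.add_apply, withDensity_apply _ hB]
  have hκm : ∀ B, MeasurableSet B → Measurable fun x => κ x B := by
    intro B hB
    simp_rw [fun x => hκB x B hB, ← lintegral_indicator hB]
    have hBm : MeasurableSet {q : ProbabilityMeasure Θ × Θ | q.2 ∈ B} := measurable_snd hB
    refine Measurable.add ?_ ?_
    · refine Measurable.lintegral_kernel_prod_right (κ := kId Θ) ?_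
      exact hfm.indicator hBm
    · refine Measurable.lintegral_kernel_prod_right
        (κ := Kernel.const (ProbabilityMeasure Θ) (μ0 : Measure Θ)) ?_
      exact hgm.indicator hBm
  have hκle : ∀ x B, MeasurableSet B → κ x B ≤ (x : Measure Θ) B +
      ENNReal.ofReal ε * (μ0 : Measure Θ) B := by
    intro x B hB
    rw [hκB x B hB]
    refine add_le_add ?_ ?_
    · calc _ ≤ ∫⁻ θ in B, 1 ∂(x : Measure Θ) := lintegral_mono fun θ => hf1 x θ
        _ = _ := by simp
    · calc _ ≤ ∫⁻ θ in B, ENNReal.ofReal ε ∂(μ0 : Measure Θ) := lintegral_mono fun θ => hg1 x θ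
        _ = _ := by simp
  have hκlow : ∀ x, ENNReal.ofReal (1 - ε) ≤ κ x Set.univ := by
    intro x
    rw [hκB x _ MeasurableSet.univ]
    refine le_trans ?_ le_self_add
    calc ENNReal.ofReal (1 - ε) = ∫⁻ θ in Set.univ, ENNReal.ofReal (1 - ε) ∂(x : Measure Θ) := by
          simp
      _ ≤ _ := lintegral_mono fun θ => hf0 x θ
  have hκ0 : ∀ x, κ x Set.univ ≠ 0 := fun x h0 => by
    have := hκlow x
    rw [h0] at this
    simp at this; linarith
  have hκt : ∀ x, κ x Set.univ ≠ ⊤ := fun x =>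
    ne_top_of_le_ne_top (by simp) (hκle x _ MeasurableSet.univ)
  let N : ProbabilityMeasure Θ → ProbabilityMeasure Θ := fun x =>
    ⟨(κ x Set.univ)⁻¹ • κ x, ⟨by
      rw [Measure.smul_apply, smul_eq_mul, ENNReal.inv_mul_cancel (hκ0 x) (hκt x)]⟩⟩
  have hNeq : ∀ x, (N x : Measure Θ) = (κ x Set.univ)⁻¹ • κ x := fun x => rfl
  refine ⟨N, pm_measurable_of fun B hB => ?_, fun x => Measure.le_iff.2 fun B hB => ?_, ?_⟩
  · simp only [hNeq, Measure.smul_apply, smul_eq_mul]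
    exact (hκm _ MeasurableSet.univ).inv.mul (hκm B hB)
  · simp only [hNeq, Measure.smul_apply, smul_eq_mul, Measure.add_apply]
    have hinv : (κ x Set.univ)⁻¹ ≤ ENNReal.ofReal (1 + c) := by
      rw [← hcε1, ENNReal.ofReal_inv_of_pos (by linarith)]
      exact ENNReal.inv_le_inv.2 (hκlow x)
    calc _ ≤ ENNReal.ofReal (1 + c) * ((x : Measure Θ) B +
          ENNReal.ofReal ε * (μ0 : Measure Θ) B) := mul_le_mul' hinv (hκle x B hB)
      _ = _ := by
        rw [mul_add, ← mul_assoc, ← ENNReal.ofReal_mul (by linarith), ← hcε1, hcε2, hcε1]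
  · intro x d hd hdm hdx hx
    have hκfin : IsFiniteMeasure (κ x) := ⟨(hκt x).lt_top⟩
    have hfin1 : IsFiniteMeasure ((x : Measure Θ).withDensity (f x)) :=
      isFiniteMeasure_of_le (κ x) (Measure.le_add_right le_rfl)
    have hfin2 : IsFiniteMeasure ((μ0 : Measure Θ).withDensity (g x)) :=
      isFiniteMeasure_of_le (κ x) (Measure.le_add_left le_rfl)
    rw [hNeq, integral_smul_measure, smul_eq_mul]
    refine mul_pos ?_ ?_
    · rw [ENNReal.toReal_inv]
      exact inv_pos.2 (ENNReal.toReal_pos (hκ0 x) (hκt x))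
    have hL : MeasurableSet {θ | h θ < m x} := measurableSet_lt hh.measurable measurable_const
    have hH : MeasurableSet {θ | m x < h θ} := measurableSet_lt measurable_const hh.measurable
    set Lo : Set Θ := {θ | h θ < m x} with hLo
    have hintd : ∀ (y : ProbabilityMeasure Θ), Integrable d (y : Measure Θ) := fun y =>
      cont_integrable hd _
    have e1 : ∫ θ, d θ ∂(x : Measure Θ).withDensity (f x) =
        (1 - ε) * ∫ θ in Lo, d θ ∂(x : Measure Θ) + ∫ θ in Loᶜ, d θ ∂(x : Measure Θ) := by
      rw [integral_withDensity_eq_integral_toReal_smul (hfx x)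
        (Eventually.of_forall fun θ => (hf1 x θ).trans_lt ENNReal.one_lt_top)]
      have hi : Integrable (fun θ => (f x θ).toReal • d θ) (x : Measure Θ) := by
        rw [← integrable_withDensity_iff_integrable_smul' (hfx x)
          (Eventually.of_forall fun θ => (hf1 x θ).trans_lt ENNReal.one_lt_top)]
        exact cont_integrable hd _
      rw [← integral_add_compl hL hi]
      congr 1
      · rw [← integral_const_mul]
        refine setIntegral_congr_fun hL fun θ hθ => ?_
        have : h θ < m x := hθ
        simp only [hfdef, this, if_true, smul_eq_mul]
        rw [ENNReal.toReal_ofReal (by linarith)]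
      · refine setIntegral_congr_fun hL.compl fun θ hθ => ?_
        have : ¬ h θ < m x := hθ
        simp only [hfdef, this, if_false, smul_eq_mul]
        simp
    have e2 : ∫ θ, d θ ∂(μ0 : Measure Θ).withDensity (g x) =
        if (x : Measure Θ) Lo = 0 then ε * ∫ θ in {θ | m x < h θ}, d θ ∂(μ0 : Measure Θ)
          else 0 := by
      rw [integral_withDensity_eq_integral_toReal_smul (hgx x)
        (Eventually.of_forall fun θ => (hg1 x θ).trans_lt ENNReal.ofReal_lt_top)]
      split_ifs with h0
      · rw [← integral_const_mul, ← integral_indicator hH]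
        refine integral_congr_ae (Eventually.of_forall fun θ => ?_)
        by_cases hθ : m x < h θ
        · simp only [hgdef]
          rw [if_pos ⟨h0, hθ⟩, Set.indicator_of_mem (by exact hθ), ENNReal.toReal_ofReal hε0.le,
            smul_eq_mul]
        · simp only [hgdef]
          rw [if_neg (fun h => hθ h.2), Set.indicator_of_notMem (by exact hθ)]
          simp
      · have : ∀ θ, g x θ = 0 := fun θ => by
          simp only [hgdef]; exact if_neg (fun h => h0 h.1)
        simp [this]
    have hκd : ∫ θ, d θ ∂(κ x) = (1 - ε) * ∫ θ in Lo, d θ ∂(x : Measure Θ) +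
        ∫ θ in Loᶜ, d θ ∂(x : Measure Θ) +
        if (x : Measure Θ) Lo = 0 then ε * ∫ θ in {θ | m x < h θ}, d θ ∂(μ0 : Measure Θ)
          else 0 := by
      rw [← e1, ← e2]
      exact integral_add_measure (cont_integrable hd _) (cont_integrable hd _)
    rw [hκd]
    have hsplit := integral_add_compl hL (hintd x)
    have hhx := cont_integrable hh (x : Measure Θ)
    by_cases h0 : (x : Measure Θ) Lo = 0
    · rw [if_pos h0]
      -- degenerate case
      have hLd : ∫ θ in Lo, d θ ∂(x : Measure Θ) = 0 := setIntegral_measure_zero _ h0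
      obtain ⟨θ0, hxθ⟩ : ∃ θ0, x = diracPM θ0 := by
        have hge : ∀ᵐ θ ∂(x : Measure Θ), 0 ≤ h θ - m x := by
          have : ∀ᵐ θ ∂(x : Measure Θ), θ ∉ Lo := measure_eq_zero_iff_ae_notMem.1 h0
          filter_upwards [this] with θ hθ
          have : ¬ h θ < m x := hθ
          linarith
        have hz : ∫ θ, (h θ - m x) ∂(x : Measure Θ) = 0 := by
          rw [integral_sub hhx (integrable_const _)]; simp [hmdef]
        have hae := (integral_eq_zero_iff_of_nonneg_ae hge (hhx.sub (integrable_const _))).1 hz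
        obtain ⟨θ0, hθ0⟩ := hae.exists
        have hθ0' : h θ0 - m x = 0 := hθ0
        refine ⟨θ0, Subtype.ext ?_⟩
        have hae2 : ∀ᵐ θ ∂(x : Measure Θ), θ = θ0 := by
          filter_upwards [hae] with θ hθ
          have : h θ - m x = 0 := hθ
          exact hinj (by linarith)
        change (x : Measure Θ) = Measure.dirac θ0
        have : (x : Measure Θ).map id = (x : Measure Θ).map (fun _ => θ0) :=
          Measure.map_congr hae2
        rw [Measure.map_id, Measure.map_const] at this
        simpa using this
      have hμ : (μ0 : Measure Θ) {θ' | h θ0 < h θ'} ≠ 0 := by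
        rcases hx with hx | ⟨θ1, h1, h2⟩
        · exact absurd hxθ (hx θ0)
        · have hi : ∀ t, x = diracPM t → m x = h t := fun t ht => by
            simp only [hmdef, ht]; exact integral_dirac _ _
          have : h θ0 = h θ1 := (hi _ hxθ).symm.trans (hi _ h1)
          rw [this]; exact h2
      have hmx : m x = h θ0 := by
        simp only [hmdef, hxθ]; exact integral_dirac _ _
      have hd0 : 0 ≤ d θ0 := by
        have : ∫ θ, d θ ∂(x : Measure Θ) = d θ0 := by
          rw [hxθ]; exact integral_dirac _ _
        linarith
      have hp := setInt_pos hd (μ0 : Measure Θ) hH (by rw [hmx]; exact hμ)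
        (fun θ hθ => hd0.trans_lt (hdm θ0 θ (by rw [← hmx]; exact hθ)))
      have := mul_pos hε0 hp
      rw [hLd] at hsplit ⊢
      linarith
    · rw [if_neg h0, add_zero]
      by_cases hneg : ∫ θ in Lo, d θ ∂(x : Measure Θ) < 0
      · nlinarith [mul_pos hε0 (neg_pos.2 hneg)]
      · push Not at hneg
        have hex : ∃ θ1 ∈ Lo, 0 ≤ d θ1 := by
          by_contra hcon
          push Not at hcon
          have := setInt_pos hd.neg (x : Measure Θ) hL h0 (fun θ hθ => by
            have := hcon θ hθ; simp only [Pi.neg_apply]; linarith)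
          simp only [Pi.neg_apply, integral_neg] at this
          linarith
        obtain ⟨θ1, hθ1, hdθ1⟩ := hex
        have hcompl : (x : Measure Θ) Loᶜ ≠ 0 := by
          intro hz
          have hx1 : (x : Measure Θ) Lo ≠ 0 := h0
          have h3 := setInt_pos (d := fun θ => m x - h θ) (by fun_prop) (x : Measure Θ) hL h0
            (fun θ hθ => by have : h θ < m x := hθ; linarith)
          have h4 := integral_add_compl hL ((integrable_const (m x)).sub hhx)
          rw [setIntegral_measure_zero _ hz, add_zero] at h4
          have h5 : ∫ θ, (m x - h θ) ∂(x : Measure Θ) = 0 := by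
            rw [integral_sub (integrable_const _) hhx]; simp [hmdef]
          have h6 : ∫ θ in Lo, (m x - h θ) ∂(x : Measure Θ) =
            ∫ θ, (m x - h θ) ∂(x : Measure Θ) := h4
          linarith
        have hp := setInt_pos hd (x : Measure Θ) hL.compl hcompl (fun θ hθ => by
          have h1 : ¬ h θ < m x := hθ
          have h2 : h θ1 < m x := hθ1
          have := hdm θ1 θ (by linarith)
          linarith)
        nlinarith [mul_nonneg (by linarith : 0 ≤ 1 - ε) hneg]

theorem side_lemma {uS uR : A → Θ → ℝ} (hS : Continuous fun p : A × Θ => uS p.1 p.2)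
    (hR : Continuous fun p : A × Θ => uR p.1 p.2) {h : Θ → ℝ} {x μ0 : ProbabilityMeasure Θ}
    {N : ℕ → ProbabilityMeasure Θ → ProbabilityMeasure Θ} {c : ℕ → ℝ} (hc0 : ∀ n, 0 ≤ c n)
    (hc : Tendsto c atTop (𝓝 0))
    (hN : ∀ n x, (N n x : Measure Θ) ≤ ENNReal.ofReal (1 + c n) • (x : Measure Θ)
      + ENNReal.ofReal (c n) • (μ0 : Measure Θ))
    (hpos : ∀ n, ∀ x : ProbabilityMeasure Θ, ∀ d : Θ → ℝ, Continuous d →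
        (∀ θ θ', h θ < h θ' → d θ < d θ') → 0 ≤ ∫ θ, d θ ∂(x : Measure Θ) →
        ((∀ θ, x ≠ diracPM θ) ∨ ∃ θ, x = diracPM θ ∧ (μ0 : Measure Θ) {θ' | h θ < h θ'} ≠ 0) →
        0 < ∫ θ, d θ ∂(N n x : Measure Θ))
    {a : A} (ha : a ∈ bestResponses uR x) (hv : senderEU uS x a = vFun uS uR x)
    {S : Set A} (hScl : IsClosed S) (hSx : S ∩ bestResponses uR x ⊆ {a})
    (hd : ∀ b, b ∉ S → ∀ θ θ', h θ < h θ' → uR a θ - uR b θ < uR a θ' - uR b θ')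
    (hcase : (∀ θ, x = diracPM θ → (μ0 : Measure Θ) {θ' | h θ < h θ'} = 0 →
      ∃ a, bestResponses uR x = {a})) :
    Tendsto (fun n => wFun uS uR (N n x)) atTop (𝓝 (vFun uS uR x)) := by
  by_cases hx : (∀ θ, x ≠ diracPM θ) ∨
      ∃ θ, x = diracPM θ ∧ (μ0 : Measure Θ) {θ' | h θ < h θ'} ≠ 0
  · refine conv_lemma hS hR hc0 hc (fun n => hN n x) hv hScl (fun n b hb => ?_) hSx
    by_contra hbS
    have cont1 : ∀ a, Continuous (uR a) := fun a =>
      hR.comp (by fun_prop : Continuous fun θ : Θ => (a, θ))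
    have e : ∀ y : ProbabilityMeasure Θ, ∫ θ, (uR a θ - uR b θ) ∂(y : Measure Θ) =
        ∫ θ, uR a θ ∂(y : Measure Θ) - ∫ θ, uR b θ ∂(y : Measure Θ) := fun y =>
      integral_sub (cont_integrable (cont1 a) _) (cont_integrable (cont1 b) _)
    have := hpos n x (fun θ => uR a θ - uR b θ) ((cont1 a).sub (cont1 b)) (hd b hbS)
      (by rw [e]; linarith [ha b]) hx
    rw [e] at this
    linarith [hb a]
  · push Not at hx
    obtain ⟨⟨θ, hθ⟩, h2⟩ := hx
    obtain ⟨a', ha'⟩ := hcase θ hθ (h2 θ hθ)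
    refine conv_lemma hS hR hc0 hc (fun n => hN n x) hv isClosed_univ (fun n => Set.subset_univ _) ?_
    rw [ha'] at ha ⊢
    rw [Set.mem_singleton_iff.1 ha]; simp

theorem msupport_null (μ0 : ProbabilityMeasure Θ) : (μ0 : Measure Θ) (msupport μ0)ᶜ = 0 := by
  refine measure_null_of_locally_null _ fun θ hθ => ?_
  have : ¬ ∀ U : Set Θ, IsOpen U → θ ∈ U → (μ0 : Measure Θ) U ≠ 0 := hθ
  push Not at this
  obtain ⟨U, hU, hθU, h0⟩ := this
  exact ⟨U, mem_nhdsWithin_of_mem_nhds (hU.mem_nhds hθU), h0⟩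

theorem msupport_closed (μ0 : ProbabilityMeasure Θ) : IsClosed (msupport μ0) := by
  rw [← isOpen_compl_iff, isOpen_iff_mem_nhds]
  intro θ hθ
  have : ¬ ∀ U : Set Θ, IsOpen U → θ ∈ U → (μ0 : Measure Θ) U ≠ 0 := hθ
  push Not at this
  obtain ⟨U, hU, hθU, h0⟩ := this
  exact mem_of_superset (hU.mem_nhds hθU) fun t ht hts => hts U hU ht h0

theorem msupport_nonempty (μ0 : ProbabilityMeasure Θ) : (msupport μ0).Nonempty := by
  by_contra h
  rw [Set.not_nonempty_iff_eq_empty] at h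
  have := msupport_null μ0
  rw [h] at this
  simp at this

theorem ae_null {Ω : Type*} [MeasurableSpace Ω] {μ0 : ProbabilityMeasure Ω}
    {p : ProbabilityMeasure (ProbabilityMeasure Ω)} (hp : p ∈ infoPolicies μ0) {B : Set Ω}
    (hB : MeasurableSet B) (h0 : (μ0 : Measure Ω) B = 0) :
    ∀ᵐ x : ProbabilityMeasure Ω ∂(p : Measure (ProbabilityMeasure Ω)), (x : Measure Ω) B = 0 := by
  have := info_lintegral.1 hp B hB
  rw [h0, lintegral_eq_zero_iff (eval_measurable hB)] at this
  exact this

theorem info_nonempty {Ω : Type*} [MeasurableSpace Ω] (μ0 : ProbabilityMeasure Ω) :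
    diracPM μ0 ∈ infoPolicies μ0 :=
  info_lintegral.2 fun _ hB => lintegral_dirac' _ (eval_measurable hB)

/-- Boundary condition on one side: almost every degenerate posterior at the `h`-top of the
support has a unique best response. -/
theorem boundary {uR : A → Θ → ℝ} {h : Θ → ℝ} (hh : Continuous h) (hinj : Function.Injective h)
    {μ0 : ProbabilityMeasure Θ} {θM : Θ} (hM : θM ∈ msupport μ0)
    (hmax : ∀ θ ∈ msupport μ0, h θ ≤ h θM)
    (hb : (μ0 : Measure Θ) {θM} = 0 ∨ ∃ a, bestResponses uR (diracPM θM) = {a})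
    {p : ProbabilityMeasure (ProbabilityMeasure Θ)} (hp : p ∈ infoPolicies μ0) :
    ∀ᵐ x ∂(p : Measure (ProbabilityMeasure Θ)), ∀ θ, x = diracPM θ →
      (μ0 : Measure Θ) {θ' | h θ < h θ'} = 0 → ∃ a, bestResponses uR x = {a} := by
  have hsm : MeasurableSet (msupport μ0)ᶜ := (msupport_closed μ0).measurableSet.compl
  have key : ∀ x : ProbabilityMeasure Θ, (x : Measure Θ) (msupport μ0)ᶜ = 0 → ∀ θ,
      x = diracPM θ → (μ0 : Measure Θ) {θ' | h θ < h θ'} = 0 → θ = θM := by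
    intro x hx θ hθ h0
    have h1 : h θM ≤ h θ := by
      by_contra hlt
      push Not at hlt
      exact hM _ (isOpen_lt continuous_const hh) hlt h0
    have h2 : θ ∈ msupport μ0 := by
      by_contra hn
      rw [hθ] at hx
      have hx' : Measure.dirac θ (msupport μ0)ᶜ = 0 := hx
      rw [Measure.dirac_apply' _ hsm, Set.indicator_of_mem (by exact hn)] at hx'
      simp at hx'
    exact hinj (le_antisymm (hmax θ h2) h1)
  rcases hb with hb | ⟨a, hb⟩
  · filter_upwards [ae_null hp hsm (msupport_null μ0), ae_null hp (measurableSet_singleton θM) hb]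
      with x hx1 hx2 θ hθ h0
    have := key x hx1 θ hθ h0
    rw [hθ, this] at hx2
    have hx' : Measure.dirac θM {θM} = 0 := hx2
    simp at hx'
  · filter_upwards [ae_null hp hsm (msupport_null μ0)] with x hx1 θ hθ h0
    rw [hθ, key x hx1 θ hθ h0]
    exact ⟨a, hb⟩

theorem core {uS uR : A → Θ → ℝ} (hS : Continuous fun p : A × Θ => uS p.1 p.2)
    (hR : Continuous fun p : A × Θ => uR p.1 p.2) {μ0 : ProbabilityMeasure Θ}
    {p : ProbabilityMeasure (ProbabilityMeasure Θ)} (hp : p ∈ infoPolicies μ0)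
    {N1 N2 : ℕ → ProbabilityMeasure Θ → ProbabilityMeasure Θ} {c : ℕ → ℝ} (hc0 : ∀ n, 0 < c n)
    (hc : Tendsto c atTop (𝓝 0)) (hN1m : ∀ n, Measurable (N1 n)) (hN2m : ∀ n, Measurable (N2 n))
    (hN1 : ∀ n x, (N1 n x : Measure Θ) ≤ ENNReal.ofReal (1 + c n) • (x : Measure Θ)
      + ENNReal.ofReal (c n) • (μ0 : Measure Θ))
    (hN2 : ∀ n x, (N2 n x : Measure Θ) ≤ ENNReal.ofReal (1 + c n) • (x : Measure Θ)
      + ENNReal.ofReal (c n) • (μ0 : Measure Θ))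
    (hlim : ∀ᵐ x ∂(p : Measure (ProbabilityMeasure Θ)),
      Tendsto (fun n => wFun uS uR (N1 n x)) atTop (𝓝 (vFun uS uR x)) ∨
      Tendsto (fun n => wFun uS uR (N2 n x)) atTop (𝓝 (vFun uS uR x))) :
    ∫ x, vFun uS uR x ∂(p : Measure (ProbabilityMeasure Θ)) ≤ wHat uS uR μ0 := by
  classical
  obtain ⟨C, hC0, hC⟩ := exists_bound hS
  have hwm := w_measurable hS hR
  have hvm := v_measurable hS hR
  have hwb := w_bound hS hR hC
  have hvb := v_bound hS hR hC
  have hbdd : BddAbove ((fun p : ProbabilityMeasure (ProbabilityMeasure Θ) =>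
      ∫ ν, wFun uS uR ν ∂(p : Measure (ProbabilityMeasure Θ))) '' infoPolicies μ0) := by
    refine ⟨C, ?_⟩
    rintro _ ⟨q, -, rfl⟩
    have := norm_integral_le_of_norm_le_const (μ := (q : Measure (ProbabilityMeasure Θ)))
      (f := wFun uS uR) (C := C) (Eventually.of_forall fun x => hwb x)
    simp only [probReal_univ, mul_one] at this
    exact (le_abs_self _).trans this
  set F : ℕ → ProbabilityMeasure Θ → ℝ := fun n x =>
    min (vFun uS uR x) (max (wFun uS uR (N1 n x)) (wFun uS uR (N2 n x))) with hF
  have hFm : ∀ n, Measurable (F n) := fun n =>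
    hvm.min ((hwm.comp (hN1m n)).max (hwm.comp (hN2m n)))
  have hFb : ∀ n x, |F n x| ≤ C := by
    intro n x
    have h1 := abs_le.1 (hvb x)
    have h2 := abs_le.1 (hwb (N1 n x))
    rw [abs_le]
    refine ⟨le_min h1.1 (le_max_of_le_left h2.1), (min_le_left _ _).trans h1.2⟩
  have hFlim : Tendsto (fun n => ∫ x, F n x ∂(p : Measure (ProbabilityMeasure Θ))) atTop
      (𝓝 (∫ x, vFun uS uR x ∂(p : Measure (ProbabilityMeasure Θ)))) := by
    refine tendsto_integral_of_dominated_convergence (fun _ => C)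
      (fun n => (hFm n).aestronglyMeasurable) (integrable_const _)
      (fun n => Eventually.of_forall (hFb n)) ?_
    filter_upwards [hlim] with x hx
    have hcv : Tendsto (fun _ : ℕ => vFun uS uR x) atTop (𝓝 (vFun uS uR x)) := tendsto_const_nhds
    rcases hx with hx | hx
    · have h1 := hcv.min hx
      rw [min_self] at h1
      exact tendsto_of_tendsto_of_tendsto_of_le_of_le h1 hcv
        (fun n => min_le_min le_rfl (le_max_left _ _)) (fun n => min_le_left _ _)
    · have h1 := hcv.min hx
      rw [min_self] at h1
      exact tendsto_of_tendsto_of_tendsto_of_le_of_le h1 hcv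
        (fun n => min_le_min le_rfl (le_max_right _ _)) (fun n => min_le_left _ _)
  have hstep : ∀ n, (1 + 2 * c n)⁻¹ * ∫ x, F n x ∂(p : Measure (ProbabilityMeasure Θ))
        - (1 - (1 + 2 * c n)⁻¹) * C ≤ wHat uS uR μ0 := by
    intro n
    set N : ProbabilityMeasure Θ → ProbabilityMeasure Θ := fun x =>
      if wFun uS uR (N2 n x) ≤ wFun uS uR (N1 n x) then N1 n x else N2 n x with hNdef
    have hNm : Measurable N := Measurable.ite
      (measurableSet_le (hwm.comp (hN2m n)) (hwm.comp (hN1m n))) (hN1m n) (hN2m n)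
    have hNle : ∀ x, (N x : Measure Θ) ≤ ENNReal.ofReal (1 + c n) • (x : Measure Θ)
        + ENNReal.ofReal (c n) • (μ0 : Measure Θ) := by
      intro x
      simp only [hNdef]; split_ifs <;> [exact hN1 n x; exact hN2 n x]
    have hFN : ∀ x, F n x ≤ wFun uS uR (N x) := by
      intro x
      refine (min_le_right _ _).trans ?_
      simp only [hNdef]
      split_ifs with hle
      · rw [max_eq_left hle]
      · push Not at hle
        rw [max_eq_right hle.le]
    obtain ⟨p', hp', hle⟩ := policy_lemma hp (hc0 n) hNm hNle hwm hwb
    have h1 : ∫ x, F n x ∂(p : Measure (ProbabilityMeasure Θ)) ≤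
        ∫ x, wFun uS uR (N x) ∂(p : Measure (ProbabilityMeasure Θ)) :=
      integral_mono
        (Integrable.of_bound (hFm n).aestronglyMeasurable C (Eventually.of_forall (hFb n)))
        (Integrable.of_bound (hwm.comp hNm).aestronglyMeasurable C
          (Eventually.of_forall fun x => hwb (N x))) hFN
    have h2 : ∫ x, wFun uS uR x ∂(p' : Measure (ProbabilityMeasure Θ)) ≤ wHat uS uR μ0 :=
      le_csSup hbdd ⟨p', hp', rfl⟩
    have h3 : 0 ≤ (1 + 2 * c n)⁻¹ := by have := hc0 n; positivity
    have h4 := mul_le_mul_of_nonneg_left h1 h3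
    linarith
  have hr : Tendsto (fun n => (1 + 2 * c n)⁻¹) atTop (𝓝 1) := by
    have : Tendsto (fun n => 1 + 2 * c n) atTop (𝓝 (1 + 2 * 0)) :=
      (hc.const_mul 2).const_add 1
    have := this.inv₀ (by norm_num)
    simpa using this
  have hall := (hr.mul hFlim).sub ((hr.const_sub 1).mul_const C)
  have := le_of_tendsto' hall hstep
  simpa using this

theorem hat_eq {uS uR : A → Θ → ℝ} (hS : Continuous fun p : A × Θ => uS p.1 p.2)
    (hR : Continuous fun p : A × Θ => uR p.1 p.2) {μ0 : ProbabilityMeasure Θ}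
    (h : ∀ p ∈ infoPolicies μ0,
      ∫ x, vFun uS uR x ∂(p : Measure (ProbabilityMeasure Θ)) ≤ wHat uS uR μ0) :
    wHat uS uR μ0 = vHat uS uR μ0 := by
  obtain ⟨C, hC0, hC⟩ := exists_bound hS
  have hwb := w_bound hS hR hC
  have hvb := v_bound hS hR hC
  refine le_antisymm ?_ ?_
  · refine csSup_le (Set.Nonempty.image _ ⟨_, info_nonempty μ0⟩) ?_
    rintro _ ⟨q, hq, rfl⟩
    refine le_trans ?_ (le_csSup (a := ∫ ν, vFun uS uR ν ∂(q : Measure (ProbabilityMeasure Θ)))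
      ⟨wHat uS uR μ0, ?_⟩ ⟨q, hq, rfl⟩)
    · exact integral_mono
        (Integrable.of_bound (w_measurable hS hR).aestronglyMeasurable C
          (Eventually.of_forall hwb))
        (Integrable.of_bound (v_measurable hS hR).aestronglyMeasurable C
          (Eventually.of_forall hvb)) (w_le_v hS hR)
    · rintro _ ⟨q, hq, rfl⟩
      exact h q hq
  · refine csSup_le (Set.Nonempty.image _ ⟨_, info_nonempty μ0⟩) ?_
    rintro _ ⟨q, hq, rfl⟩
    exact h q hq

end Aux

/-- **Lemma behind the ordered-model theorem.** Suppose `A, Θ ⊆ ℝ`, `u_R` has strictly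
increasing differences, at every belief the sender's best payoff among receiver best
responses is attained at the smallest or largest element of `A*_R(μ)`, and for each
endpoint `θ̄` of the support of the prior, either `μ0({θ̄}) = 0` or the receiver's
best response at `δ_θ̄` is unique. Then the sender has a unique equilibrium payoff. -/
theorem unique_payoff_ordered_extreme
    (A Θ : Set ℝ) [Nonempty ↥A] [Nonempty ↥Θ] [CompactSpace ↥A] [CompactSpace ↥Θ]
    (uS uR : ↥A → ↥Θ → ℝ)
    (hS : Continuous fun p : ↥A × ↥Θ => uS p.1 p.2)
    (hR : Continuous fun p : ↥A × ↥Θ => uR p.1 p.2)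
    (hsid : ∀ a a' : ↥A, (a : ℝ) < (a' : ℝ) → ∀ θ θ' : ↥Θ, (θ : ℝ) < (θ' : ℝ) →
      uR a' θ - uR a θ < uR a' θ' - uR a θ')
    (hext : ∀ μ : ProbabilityMeasure ↥Θ, ∃ a ∈ bestResponses uR μ,
      senderEU uS μ a = vFun uS uR μ ∧
      ((a : ℝ) = sInf ((fun b : ↥A => (b : ℝ)) '' bestResponses uR μ) ∨
        (a : ℝ) = sSup ((fun b : ↥A => (b : ℝ)) '' bestResponses uR μ)))
    (μ0 : ProbabilityMeasure ↥Θ)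
    (hbdry : ∀ θbar : ↥Θ,
      ((θbar : ℝ) = sInf ((fun t : ↥Θ => (t : ℝ)) '' msupport μ0) ∨
        (θbar : ℝ) = sSup ((fun t : ↥Θ => (t : ℝ)) '' msupport μ0)) →
      ((μ0 : Measure ↥Θ) {θbar} = 0 ∨ ∃ a : ↥A, bestResponses uR (diracPM θbar) = {a})) :
    wHat uS uR μ0 = vHat uS uR μ0 := by
  refine hat_eq hS hR fun p hp => ?_
  have hc0 : ∀ n : ℕ, (0 : ℝ) < 1 / ((n : ℝ) + 1) := fun n => by positivity
  have hc : Filter.Tendsto (fun n : ℕ => 1 / ((n : ℝ) + 1)) Filter.atTop (nhds 0) :=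
    tendsto_one_div_add_atTop_nhds_zero_nat
  have hcu : Continuous fun t : ↥Θ => (t : ℝ) := continuous_subtype_val
  have hcd : Continuous fun t : ↥Θ => -(t : ℝ) := hcu.neg
  have hiu : Function.Injective fun t : ↥Θ => (t : ℝ) := Subtype.val_injective
  have hid : Function.Injective fun t : ↥Θ => -(t : ℝ) := fun a b hab =>
    Subtype.ext (neg_injective hab)
  choose N1 hN1m hN1 hN1p using fun n => perturb hcu hiu μ0 (hc0 n)
  choose N2 hN2m hN2 hN2p using fun n => perturb hcd hid μ0 (hc0 n)
  refine core hS hR hp hc0 hc hN1m hN2m hN1 hN2 ?_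
  have hcomp : IsCompact ((fun t : ↥Θ => (t : ℝ)) '' msupport μ0) :=
    (msupport_closed μ0).isCompact.image hcu
  have hne := (msupport_nonempty μ0).image (fun t : ↥Θ => (t : ℝ))
  obtain ⟨θM, hM, hMe⟩ := hcomp.sSup_mem hne
  obtain ⟨θm, hm, hme⟩ := hcomp.sInf_mem hne
  have b1 := boundary (uR := uR) hcu hiu hM
    (fun θ hθ => by
      have := le_csSup hcomp.bddAbove ⟨θ, hθ, rfl⟩
      rw [← hMe] at this; exact this)
    (hbdry θM (Or.inr hMe)) hp
  have b2 := boundary (uR := uR) hcd hid hm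
    (fun θ hθ => by
      have := csInf_le hcomp.bddBelow ⟨θ, hθ, rfl⟩
      rw [← hme] at this; exact neg_le_neg this)
    (hbdry θm (Or.inl hme)) hp
  filter_upwards [b1, b2] with x h1 h2
  obtain ⟨a, ha, hav, hae⟩ := hext x
  have hbr : IsCompact ((fun b : ↥A => (b : ℝ)) '' bestResponses uR x) :=
    (br_closed hR x).isCompact.image continuous_subtype_val
  rcases hae with hae | hae
  · right
    refine side_lemma hS hR (fun n => (hc0 n).le) hc hN2 hN2p ha hav
      (S := {b : ↥A | (b : ℝ) ≤ a}) (isClosed_le continuous_subtype_val continuous_const)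
      ?_ ?_ h2
    · rintro b ⟨hb1, hb2⟩
      have := csInf_le hbr.bddBelow ⟨b, hb2, rfl⟩
      rw [← hae] at this
      exact Subtype.ext (le_antisymm hb1 this)
    · intro b hb θ θ' hlt
      have hb' : (a : ℝ) < b := not_le.1 hb
      have := hsid a b hb' θ' θ (neg_lt_neg_iff.1 hlt)
      linarith
  · left
    refine side_lemma hS hR (fun n => (hc0 n).le) hc hN1 hN1p ha hav
      (S := {b : ↥A | (a : ℝ) ≤ b}) (isClosed_le continuous_const continuous_subtype_val)
      ?_ ?_ h1
    · rintro b ⟨hb1, hb2⟩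
      have := le_csSup hbr.bddAbove ⟨b, hb2, rfl⟩
      rw [← hae] at this
      exact Subtype.ext (le_antisymm this hb1)
    · intro b hb θ θ' hlt
      have hb' : (b : ℝ) < a := not_le.1 hb
      exact hsid b a hb' θ θ' hlt
end
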